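/- arXiv:2505.13781 — 4 statements merged into one kernel-verified Lean document; each statement's English description precedes it below -/
import Mathlib

section
/- There exists a constant C > 0 such that for all t, n ∈ ℕ with n ≥ C·t⁷ and every function c from 𝔽₂ⁿ ∖ {0} to {Red, Blue}, there is either a 2-dimensional linear subspace of 𝔽₂ⁿ all of whose nonzero vectors are coloured Red, or a t-dimensional linear subspace of 𝔽₂ⁿ all of whose nonzero vectors are coloured Blue. -/
/-!
If the red vectors `R` contain no `a`, `b`, `a + b`, then the autocorrelation of `A = R` vanishes on
`R`. Since its Fourier coefficients are nonnegative, its moments of order `O(t)` must then be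
large as soon as `R` has density at least `2⁻ᵗ`. In the manner of Kelley and Meka, sifting turns the
large moment into a set `B` of density `2^(-O(t²))` on almost all of whose differences the
autocorrelation exceeds its mean by a constant factor. Croot–Sisask almost-periodicity and Chang's
theorem smooth this out along a subspace of codimension `O(t⁶)`, which has a coset where the density
of `A` grows by the factor `6 / 5`.

If every `t`-dimensional subspace contains a red vector, a greedy argument shows that `R` has
density at least `2⁻ᵗ` in every subspace of dimension at least `t`. The increment can thus be
repeated with `A` replaced by a dense slice and `R` by its part in the subspace, until after `4t`
rounds the density of `A` would exceed `1`.
-/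

namespace SubspaceRamsey

open Finset
open scoped BigOperators

section Density

variable {α β : Type*} [Fintype α] [Fintype β]

lemma expect_boole_eq_dens (p : α → Prop) [DecidablePred p] :
    𝔼 x, (if p x then (1 : ℝ) else 0) = ({x | p x} : Finset α).dens := by
  rw [Fintype.expect_eq_sum_div_card, sum_boole, nnratCast_dens]

lemma expect_dens_comm (P : α → β → Prop) [∀ a b, Decidable (P a b)] :
    𝔼 a, (({b | P a b} : Finset β).dens : ℝ) = 𝔼 b, (({a | P a b} : Finset α).dens : ℝ) := by
  simp only [← expect_boole_eq_dens]
  exact expect_comm ..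

lemma nonempty_of_le_dens {s : Finset α} {c : ℝ} (hc : 0 < c) (h : c ≤ s.dens) : s.Nonempty := by
  rw [← dens_pos, ← NNRat.cast_pos (K := ℝ)]
  exact hc.trans_le h

lemma mul_dens_lt_le_expect {f : α → ℝ} (hf : 0 ≤ f) (a : ℝ) :
    a * ({x | a < f x} : Finset α).dens ≤ 𝔼 x, f x := by
  rw [← expect_boole_eq_dens, mul_expect]
  refine expect_le_expect fun x _ => ?_
  split_ifs with h
  · simpa using h.le
  · simpa using hf x

lemma dens_filter_comp_equiv (e : α ≃ β) (p : β → Prop) [DecidablePred p] :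
    ({x | p (e x)} : Finset α).dens = ({y | p y} : Finset β).dens := by
  rw [← dens_map_equiv e]
  congr 1
  ext y
  simp

lemma half_le_dens_of_forall_dens_le {P : α → β → Prop} [∀ a b, Decidable (P a b)] {δ : ℝ}
    [Nonempty α] [Nonempty β] (hδ : 0 < δ)
    (hP : ∀ b, 2 * (({a | P a b} : Finset α).dens : ℝ) ≤ δ) :
    1 / 2 ≤ (({a | (({b | P a b} : Finset β).dens : ℝ) ≤ δ} : Finset α).dens : ℝ) := by
  have hmarkov := (mul_dens_lt_le_expect (fun a => by positivity) δ).trans_eq (expect_dens_comm P)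
  have hmean : 𝔼 b, (({a | P a b} : Finset α).dens : ℝ) ≤ δ / 2 :=
    expect_le univ_nonempty fun b _ => by linarith [hP b]
  have hcompl := dens_filter_add_dens_filter_not_eq_dens (s := (univ : Finset α))
    (fun a => (({b | P a b} : Finset β).dens : ℝ) ≤ δ)
  have hcompl' := congrArg (NNRat.cast (K := ℝ)) hcompl
  simp only [not_le, NNRat.cast_add, dens_univ, NNRat.cast_one] at hcompl'
  have : (({a | δ < (({b | P a b} : Finset β).dens : ℝ)} : Finset α).dens : ℝ) ≤ 1 / 2 :=
    le_of_mul_le_mul_left (by linarith) hδ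
  linarith

lemma dens_filter_le_add {p q r : α → Prop} [DecidablePred p] [DecidablePred q] [DecidablePred r]
    (h : ∀ x, p x → q x ∨ r x) :
    (({x | p x} : Finset α).dens : ℝ) ≤
      ({x | q x} : Finset α).dens + ({x | r x} : Finset α).dens := by
  classical
  have hsub : ({x | p x} : Finset α) ⊆ ({x | q x} : Finset α) ∪ ({x | r x} : Finset α) := by
    intro x
    simpa using h x
  exact_mod_cast (dens_le_dens hsub).trans (dens_union_le _ _)

lemma dens_add_lt_abs_sub_le (f g h : α → ℝ) (ε ε' : ℝ) :
    (({x | ε + ε' < |f x - h x|} : Finset α).dens : ℝ) ≤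
      ({x | ε < |f x - g x|} : Finset α).dens + ({x | ε' < |g x - h x|} : Finset α).dens := by
  refine dens_filter_le_add fun x hx => ?_
  contrapose! hx
  exact (abs_sub_le _ (g x) _).trans (add_le_add hx.1 hx.2)

end Density

section Sifting

variable {G : Type*} [AddCommGroup G] [Fintype G] [DecidableEq G]

/-- The self-correlation of a finite set `A`, normalised to have mean `1` when `A` is nonempty. -/
noncomputable def autocorr (A : Finset G) (x : G) : ℝ :=
  ({a ∈ A | a + x ∈ A} : Finset G).dens / (A.dens : ℝ) ^ 2

lemma autocorr_nonneg (A : Finset G) (x : G) : 0 ≤ autocorr A x := by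
  unfold autocorr; positivity

lemma autocorr_eq_zero {A : Finset G} {x : G} (h : ∀ a ∈ A, a + x ∉ A) : autocorr A x = 0 := by
  rw [autocorr, filter_eq_empty_iff.2 h]
  simp

lemma dens_filter_add_mem (A : Finset G) (x : G) :
    (({a ∈ A | a + x ∈ A} : Finset G).dens : ℝ) = autocorr A x * (A.dens : ℝ) ^ 2 := by
  rcases A.eq_empty_or_nonempty with rfl | hA
  · simp
  · have : (0 : ℝ) < A.dens := by simpa using hA
    rw [autocorr, div_mul_cancel₀ _ (by positivity)]

/-- The intersection of the translates `A - s i`; sifting picks the shifts `s` at random. -/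
def sift {ι : Type*} [Fintype ι] (A : Finset G) (s : ι → G) : Finset G := {x | ∀ i, x + s i ∈ A}

lemma dens_filter_add_mem_eq_expect (A : Finset G) (b x : G) :
    (({a ∈ A | a + x ∈ A} : Finset G).dens : ℝ) =
      𝔼 s, if b + s ∈ A ∧ b + x + s ∈ A then (1 : ℝ) else 0 := by
  have h : ({a ∈ A | a + x ∈ A} : Finset G) = ({a | a ∈ A ∧ a + x ∈ A} : Finset G) := by ext; simp
  rw [h, ← expect_boole_eq_dens]
  refine (Fintype.expect_equiv (Equiv.addLeft b) _ _ fun s => ?_).symm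
  simp [add_right_comm]

lemma expect_sum_sift (A : Finset G) (w : G → ℝ) (p : ℕ) :
    𝔼 s : Fin p → G, ∑ b ∈ sift A s, ∑ b' ∈ sift A s, w (b' - b) =
      Fintype.card G * ∑ x, w x * (({a ∈ A | a + x ∈ A} : Finset G).dens : ℝ) ^ p := by
  have hfix (b x : G) :
      𝔼 s : Fin p → G, w x * (if b ∈ sift A s ∧ b + x ∈ sift A s then (1 : ℝ) else 0) =
        w x * (({a ∈ A | a + x ∈ A} : Finset G).dens : ℝ) ^ p := by
    rw [dens_filter_add_mem_eq_expect A b x, expect_pow, Fintype.piFinset_univ, ← mul_expect]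
    simp [sift, prod_boole, forall_and]
  calc
    _ = 𝔼 s : Fin p → G, ∑ b, ∑ x, w x *
          (if b ∈ sift A s ∧ b + x ∈ sift A s then (1 : ℝ) else 0) := by
      refine expect_congr rfl fun s _ => ?_
      rw [← filter_univ_mem (sift A s), sum_filter]
      refine sum_congr rfl fun b _ => ?_
      rw [sum_filter, ← Equiv.sum_comp (Equiv.addLeft b)]
      simp [ite_and]
    _ = ∑ _b : G, ∑ x, w x * (({a ∈ A | a + x ∈ A} : Finset G).dens : ℝ) ^ p := by
      simp only [expect_sum_comm, hfix]
    _ = _ := by simp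

lemma le_expect_sum_sift_of_autocorr_moment {A : Finset G} {p : ℕ} {τ L : ℝ}
    (hτ : 0 ≤ τ) (hL : 0 ≤ L) (hmom : 1 + L * τ ^ p ≤ 𝔼 x, autocorr A x ^ p) :
    (Fintype.card G * (A.dens : ℝ) ^ p) ^ 2 ≤
      𝔼 s : Fin p → G, ∑ b ∈ sift A s, ∑ b' ∈ sift A s,
        (1 - L * if autocorr A (b' - b) < τ then (1 : ℝ) else 0) := by
  let w (x : G) : ℝ := 1 - L * if autocorr A x < τ then 1 else 0
  have hpoint (x : G) : autocorr A x ^ p - L * τ ^ p ≤ w x * autocorr A x ^ p := by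
    have h0 := autocorr_nonneg A x
    have hLτ : 0 ≤ L * τ ^ p := by positivity
    simp only [w]
    split_ifs with h
    · have : L * autocorr A x ^ p ≤ L * τ ^ p := by gcongr
      linarith
    · linarith
  have hone : 1 ≤ 𝔼 x, w x * autocorr A x ^ p := by
    refine le_trans ?_ (expect_le_expect fun x _ => hpoint x)
    rw [expect_sub_distrib, Fintype.expect_const]
    linarith
  calc (Fintype.card G * (A.dens : ℝ) ^ p) ^ 2
      ≤ (Fintype.card G * (A.dens : ℝ) ^ p) ^ 2 * 𝔼 x, w x * autocorr A x ^ p :=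
        le_mul_of_one_le_right (by positivity) hone
    _ = Fintype.card G * ∑ x, w x * (({a ∈ A | a + x ∈ A} : Finset G).dens : ℝ) ^ p := by
        simp only [dens_filter_add_mem, mul_pow _ _ p, ← mul_assoc, ← sum_mul]
        rw [← Fintype.card_mul_expect]
        ring
    _ = _ := (expect_sum_sift A w p).symm

lemma exists_dens_of_autocorr_moment {A : Finset G} (hA : A.Nonempty) {p : ℕ} {τ L : ℝ}
    (hτ : 0 ≤ τ) (hL : 0 ≤ L) (hmom : 1 + L * τ ^ p ≤ 𝔼 x, autocorr A x ^ p) :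
    ∃ B : Finset G, (A.dens : ℝ) ^ p ≤ B.dens ∧
      L * 𝔼 b ∈ B, 𝔼 b' ∈ B, (if autocorr A (b' - b) < τ then (1 : ℝ) else 0) ≤ 1 := by
  obtain ⟨s, -, hs⟩ :=
    exists_le_of_le_expect univ_nonempty (le_expect_sum_sift_of_autocorr_moment hτ hL hmom)
  set N := (Fintype.card G : ℝ)
  set B := sift A s
  set bad := 𝔼 b ∈ B, 𝔼 b' ∈ B, (if autocorr A (b' - b) < τ then (1 : ℝ) else 0)
  have hN : 0 < N := by simp [N, Fintype.card_pos]
  have hα : (0 : ℝ) < A.dens := by simpa using hA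
  have hcard : (#B : ℝ) = N * B.dens := by simp [N]
  have hcount : (N * (A.dens : ℝ) ^ p) ^ 2 ≤ (#B : ℝ) ^ 2 * (1 - L * bad) := by
    simp only [sum_sub_distrib, sum_const, nsmul_eq_mul, mul_one, ← mul_sum] at hs
    simp only [← card_mul_expect, ← mul_expect] at hs
    linarith
  have hbad : 0 ≤ bad := expect_nonneg fun b _ => expect_nonneg fun b' _ => by positivity
  have hpos : 0 < (N * (A.dens : ℝ) ^ p) ^ 2 := by positivity
  refine ⟨B, ?_, ?_⟩
  · have hle : N * (A.dens : ℝ) ^ p ≤ N * B.dens := by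
      rw [← hcard, ← pow_le_pow_iff_left₀ (by positivity) (by positivity) two_ne_zero]
      nlinarith [mul_nonneg hL hbad]
    exact le_of_mul_le_mul_left hle hN
  · have := pos_of_mul_pos_right (hpos.trans_le hcount) (sq_nonneg _)
    linarith

end Sifting

section Hoeffding

lemma exp_mul_le_cosh_add_mul_sinh {x : ℝ} (hx : |x| ≤ 1) (l : ℝ) :
    Real.exp (l * x) ≤ Real.cosh l + x * Real.sinh l := by
  obtain ⟨hx₁, hx₂⟩ := abs_le.1 hx
  have hconv := convexOn_exp.2 (Set.mem_univ l) (Set.mem_univ (-l))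
    (show 0 ≤ (1 + x) / 2 by linarith) (show 0 ≤ (1 - x) / 2 by linarith) (by ring)
  rw [smul_eq_mul, smul_eq_mul, smul_eq_mul, smul_eq_mul,
    show (1 + x) / 2 * l + (1 - x) / 2 * -l = l * x by ring] at hconv
  rw [Real.cosh_eq, Real.sinh_eq]
  linarith

variable {κ : Type*} [Fintype κ] [Nonempty κ] {X : κ → ℝ}

lemma expect_exp_mul_sum_le (hX : ∀ k, |X k| ≤ 1) (hmean : 𝔼 k, X k = 0) (n : ℕ) (l : ℝ) :
    𝔼 b : Fin n → κ, Real.exp (l * ∑ i, X (b i)) ≤ Real.exp (n * (l ^ 2 / 2)) := by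
  have hone : 𝔼 k, Real.exp (l * X k) ≤ Real.exp (l ^ 2 / 2) := calc
    _ ≤ 𝔼 k, (Real.cosh l + X k * Real.sinh l) :=
      expect_le_expect fun k _ => exp_mul_le_cosh_add_mul_sinh (hX k) l
    _ = Real.cosh l := by
      rw [expect_add_distrib, ← expect_mul, hmean, zero_mul, add_zero, Fintype.expect_const]
    _ ≤ _ := Real.cosh_le_exp_half_sq l
  calc 𝔼 b : Fin n → κ, Real.exp (l * ∑ i, X (b i))
      = (𝔼 k, Real.exp (l * X k)) ^ n := by
        simp only [expect_pow, Fintype.piFinset_univ, mul_sum, Real.exp_sum]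
    _ ≤ Real.exp (l ^ 2 / 2) ^ n := by
        gcongr
    _ = _ := by rw [← Real.exp_nat_mul]

lemma dens_lt_sum_le (hX : ∀ k, |X k| ≤ 1) (hmean : 𝔼 k, X k = 0) (n : ℕ) {η : ℝ} (hη : 0 < η) :
    (({b : Fin n → κ | n * η < ∑ i, X (b i)} : Finset (Fin n → κ)).dens : ℝ) ≤
      Real.exp (-(n * η ^ 2 / 2)) := by
  have hmarkov := (mul_dens_lt_le_expect (fun _ => (Real.exp_pos _).le)
    (Real.exp (η * (n * η)))).trans (expect_exp_mul_sum_le hX hmean n η)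
  simp only [Real.exp_lt_exp, mul_lt_mul_iff_right₀ hη] at hmarkov
  rw [← le_div_iff₀' (Real.exp_pos _), ← Real.exp_sub] at hmarkov
  exact hmarkov.trans_eq (by ring_nf)

/-- Hoeffding's inequality. -/
lemma dens_lt_abs_sum_le (hX : ∀ k, |X k| ≤ 1) (hmean : 𝔼 k, X k = 0) (n : ℕ) {η : ℝ}
    (hη : 0 < η) :
    (({b : Fin n → κ | n * η < |∑ i, X (b i)|} : Finset (Fin n → κ)).dens : ℝ) ≤
      2 * Real.exp (-(n * η ^ 2 / 2)) := by
  have hsplit := dens_filter_le_add (p := fun b : Fin n → κ => n * η < |∑ i, X (b i)|)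
    (q := fun b => n * η < ∑ i, X (b i)) (r := fun b => n * η < ∑ i, -X (b i))
    fun b => by rw [lt_abs, sum_neg_distrib]; exact id
  have hpos := dens_lt_sum_le hX hmean n hη
  have hneg := dens_lt_sum_le (X := fun k => -X k) (by simpa using hX)
    (by simp [expect_neg_distrib, hmean]) n hη
  linarith

end Hoeffding

section AlmostPeriods

variable {G : Type*} [AddCommGroup G] [Fintype G]

/-- The average of `f` over the translate `y + B`. -/
noncomputable def shiftMean (B : Finset G) (f : G → ℝ) (y : G) : ℝ := 𝔼 b ∈ B, f (y + b)

lemma exists_dens_le_dens_translate {H : Type*} [AddCommGroup H] [Fintype H] [DecidableEq H]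
    (f : G → H) (L : Finset H) : ∃ z, (L.dens : ℝ) ≤ ({x | z - f x ∈ L} : Finset G).dens := by
  have hmean : (L.dens : ℝ) ≤ 𝔼 z, (({x | z - f x ∈ L} : Finset G).dens : ℝ) := by
    rw [expect_dens_comm, ← Fintype.expect_const (ι := G) (L.dens : ℝ)]
    refine (expect_congr rfl fun x _ => congrArg NNRat.cast ?_).ge
    exact (dens_filter_comp_equiv (Equiv.subRight (f x)) (· ∈ L)).trans (by rw [filter_univ_mem])
  obtain ⟨z, -, hz⟩ := exists_le_of_le_expect univ_nonempty hmean
  exact ⟨z, hz⟩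

lemma dens_map_piMap_subtype [DecidableEq G] (B : Finset G) (n : ℕ) (L : Finset (Fin n → B)) :
    ((L.image fun b i => (b i : G)).dens : ℝ) = L.dens * (B.dens : ℝ) ^ n := by
  have hinj : Function.Injective fun (b : Fin n → B) i => (b i : G) :=
    fun b b' h => funext fun i => Subtype.ext (congrFun h i)
  rcases isEmpty_or_nonempty (Fin n → B) with hB | hB
  · simp [eq_empty_of_isEmpty L]
  have hBn : (#B : ℝ) ^ n ≠ 0 := by
    have := Fintype.card_ne_zero (α := Fin n → B)
    simpa using this
  simp only [nnratCast_dens, card_image_of_injective _ hinj, Fintype.card_fun, Fintype.card_coe,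
    Fintype.card_fin, Nat.cast_pow, div_pow]
  field_simp

omit [Fintype G] in
lemma shiftMean_mem_Icc {B : Finset G} {f : G → ℝ}
    (hf : ∀ x, f x ∈ Set.Icc 0 1) (y : G) : shiftMean B f y ∈ Set.Icc 0 1 := by
  rcases B.eq_empty_or_nonempty with rfl | hB
  · simp [shiftMean]
  · exact ⟨expect_nonneg fun b _ => (hf _).1, expect_le hB fun b _ => (hf _).2⟩

omit [Fintype G] in
lemma dens_lt_abs_sampleMean_sub_shiftMean_le {B : Finset G} (hB : B.Nonempty) {f : G → ℝ}
    (hf : ∀ x, f x ∈ Set.Icc 0 1) {n : ℕ} (hn : 0 < n) {η : ℝ} (hη : 0 < η) (y : G) :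
    (({b : Fin n → B | η < |𝔼 i, f (y + b i) - shiftMean B f y|} : Finset _).dens : ℝ) ≤
      2 * Real.exp (-(n * η ^ 2 / 2)) := by
  have := hB.to_subtype
  have hn' : (0 : ℝ) < n := by exact_mod_cast hn
  have hbound (b : B) : |f (y + b) - shiftMean B f y| ≤ 1 :=
    abs_sub_le_of_nonneg_of_le (hf _).1 (hf _).2 (shiftMean_mem_Icc hf y).1
      (shiftMean_mem_Icc hf y).2
  have hmean : 𝔼 b : B, (f (y + b) - shiftMean B f y) = 0 := by
    rw [expect_sub_distrib, Fintype.expect_const, shiftMean,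
      Fintype.expect_eq_sum_div_card, expect_eq_sum_div_card, sum_coe_sort B fun b => f (y + b),
      Fintype.card_coe, sub_self]
  convert dens_lt_abs_sum_le hbound hmean n hη using 4 with b
  have := Fin.pos_iff_nonempty.1 hn
  rw [Fintype.expect_eq_sum_div_card, sum_sub_distrib, sum_const, card_univ, Fintype.card_fin,
    nsmul_eq_mul, div_sub' hn'.ne', abs_div, abs_of_pos hn', lt_div_iff₀' hn']

/-- The Croot–Sisask lemma on almost-periods. -/
lemma exists_almost_periods {B : Finset G} (hB : B.Nonempty) {f : G → ℝ}
    (hf : ∀ x, f x ∈ Set.Icc 0 1) {n : ℕ} (hn : 0 < n) {η δ : ℝ} (hη : 0 < η)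
    (hδ : 4 * Real.exp (-(n * η ^ 2 / 2)) ≤ δ) :
    ∃ X : Finset G, (B.dens : ℝ) ^ n / 2 ≤ X.dens ∧ ∀ x ∈ X, ∀ x' ∈ X,
      (({y | η + η < |shiftMean B f (y + x) - shiftMean B f (y + x')|} : Finset G).dens : ℝ) ≤
        δ + δ := by
  classical
  have := hB.to_subtype
  set L : Finset (Fin n → B) := {b | (({y | η < |𝔼 i, f (y + b i) - shiftMean B f y|} :
    Finset G).dens : ℝ) ≤ δ}
  have hL : 1 / 2 ≤ (L.dens : ℝ) := half_le_dens_of_forall_dens_le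
    ((by positivity : (0 : ℝ) < _).trans_le hδ) fun y => by
      linarith [dens_lt_abs_sampleMean_sub_shiftMean_le hB hf hn hη y]
  obtain ⟨z, hz⟩ := exists_dens_le_dens_translate (fun (x : G) (_ : Fin n) => x)
    (L.image fun b i => (b i : G))
  set X : Finset G := {x | (z - fun _ => x) ∈ L.image fun b i => (b i : G)}
  have happrox {x : G} (hx : x ∈ X) :
      (({y | η < |𝔼 i, f (y + z i) - shiftMean B f (y + x)|} : Finset G).dens : ℝ) ≤ δ := by
    obtain ⟨b, hb, hbz⟩ := mem_image.1 (mem_filter.1 hx).2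
    have hz (i : Fin n) : z i = x + b i := by simp [congrFun hbz i]
    simp only [hz, ← add_assoc]
    exact (congrArg NNRat.cast (dens_filter_comp_equiv (Equiv.addRight x)
      fun y => η < |𝔼 i, f (y + b i) - shiftMean B f y|)).trans_le (mem_filter.1 hb).2
  refine ⟨X, ?_, fun x hx x' hx' => ?_⟩
  · rw [dens_map_piMap_subtype] at hz
    refine le_trans ?_ hz
    rw [div_eq_inv_mul, ← one_div]
    gcongr
  · refine (dens_add_lt_abs_sub_le _ (fun y => 𝔼 i, f (y + z i)) _ η η).trans
      (add_le_add ?_ (happrox hx'))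
    simpa only [abs_sub_comm] using happrox hx

lemma dens_lt_abs_sub_shift_sum_le {ι : Type*} {g : G → ℝ} {u v : ι → G} {ε δ : ℝ}
    (huv : ∀ i, (({y | ε < |g (y + u i) - g (y + v i)|} : Finset G).dens : ℝ) ≤ δ)
    (t : Finset ι) :
    (({y | #t * ε < |g (y + ∑ i ∈ t, (u i - v i)) - g y|} : Finset G).dens : ℝ) ≤ #t * δ := by
  classical
  induction t using Finset.induction_on with
  | empty => simp
  | insert a t ha ih =>
    have hstep := huv a
    rw [← dens_filter_comp_equiv (Equiv.addRight (∑ i ∈ t, (u i - v i) - v a))] at hstep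
    have hsplit := dens_add_lt_abs_sub_le (fun y => g (y + ∑ i ∈ insert a t, (u i - v i)))
      (fun y => g (y + ∑ i ∈ t, (u i - v i))) g ε (#t * ε)
    have hcard : (#(insert a t) : ℝ) = 1 + #t := by
      rw [card_insert_of_notMem ha, Nat.cast_add, Nat.cast_one, add_comm]
    rw [hcard, add_mul, one_mul, add_mul, one_mul]
    refine hsplit.trans (add_le_add (hstep.trans_eq' ?_) ih)
    congr! 7 with y
    · rw [sum_insert ha]; simp only [Equiv.coe_addRight]; abel
    · simp only [Equiv.coe_addRight]; abel

lemma expect_sub_le_expect_shift {B : Finset G} (hB : B.Nonempty) {g : G → ℝ}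
    (hg : ∀ x, g x ∈ Set.Icc 0 1) {σ : G} {ε δ : ℝ} (hε : 0 ≤ ε)
    (hσ : (({y | ε < |g (y + σ) - g y|} : Finset G).dens : ℝ) ≤ δ * B.dens) :
    𝔼 b ∈ B, g b - (ε + δ) ≤ 𝔼 b ∈ B, g (b + σ) := by
  have hBpos : (0 : ℝ) < #B := by exact_mod_cast hB.card_pos
  have hpoint (y : G) : g y - ε - (if ε < |g (y + σ) - g y| then (1 : ℝ) else 0) ≤ g (y + σ) := by
    split_ifs with h
    · linarith [(hg y).2, (hg (y + σ)).1]
    · linarith [(abs_le.1 (not_lt.1 h)).1]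
  have hexc : 𝔼 y ∈ B, (if ε < |g (y + σ) - g y| then (1 : ℝ) else 0) ≤ δ := by
    rw [expect_eq_sum_div_card, div_le_iff₀ hBpos, sum_boole]
    rw [nnratCast_dens, nnratCast_dens, mul_div_assoc', div_le_div_iff_of_pos_right
      (by exact_mod_cast Fintype.card_pos)] at hσ
    refine le_trans ?_ hσ
    exact_mod_cast card_le_card (filter_subset_filter _ (subset_univ B))
  have hmean := expect_le_expect (s := B) fun y _ => hpoint y
  rw [expect_sub_distrib, expect_sub_distrib, expect_const hB] at hmean
  linarith

lemma exists_forall_expect_shiftMean_sub_le {B : Finset G} (hB : B.Nonempty)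
    {f : G → ℝ} (hf : ∀ x, f x ∈ Set.Icc 0 1) {n k : ℕ} (hn : 0 < n) (hk : 0 < k) {ε : ℝ}
    (hε : 0 < ε) (hnk : 4 * Real.exp (-(n * (ε / (4 * k)) ^ 2 / 2)) ≤ ε / (4 * k) * B.dens) :
    ∃ X : Finset G, (B.dens : ℝ) ^ n / 2 ≤ X.dens ∧
      ∀ u v : Fin k → G, (∀ i, u i ∈ X) → (∀ i, v i ∈ X) →
        𝔼 b ∈ B, shiftMean B f b - ε ≤ 𝔼 b ∈ B, shiftMean B f (b + ∑ i, (u i - v i)) := by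
  obtain ⟨X, hXdens, hX⟩ := exists_almost_periods hB hf hn (by positivity) hnk
  refine ⟨X, hXdens, fun u v hu hv => ?_⟩
  have hk' : (k : ℝ) ≠ 0 := by exact_mod_cast hk.ne'
  have hshift := dens_lt_abs_sub_shift_sum_le (fun i => hX _ (hu i) _ (hv i)) univ
  rw [card_univ, Fintype.card_fin,
    show k * (ε / (4 * k) + ε / (4 * k)) = ε / 2 by field_simp; norm_num,
    show k * (ε / (4 * k) * B.dens + ε / (4 * k) * B.dens) = ε / 2 * B.dens by
      field_simp; norm_num] at hshift
  simpa only [add_halves] using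
    expect_sub_le_expect_shift hB (shiftMean_mem_Icc hf) (by positivity) hshift

end AlmostPeriods

section Fourier

lemma addChar_map_sum_eq_prod {ι G M : Type*} [AddCommMonoid G] [CommMonoid M] (χ : AddChar G M)
    (f : ι → G) (s : Finset ι) : χ (∑ i ∈ s, f i) = ∏ i ∈ s, χ (f i) :=
  map_prod χ.toMonoidHom (fun i => Multiplicative.ofAdd (f i)) s

variable {V : Type*} [AddCommGroup V] [Module (ZMod 2) V]

/-- The character `x ↦ (-1) ^ φ x` attached to a linear functional over `𝔽₂`. Every character of a
finite `𝔽₂`-space has this form and is real, so functionals index the Fourier transform. -/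
def dualChar (φ : Module.Dual (ZMod 2) V) : AddChar V ℝ :=
  (AddChar.zmodChar 2 (neg_one_sq : (-1 : ℝ) ^ 2 = 1)).compAddMonoidHom φ.toAddMonoidHom

lemma dualChar_apply (φ : Module.Dual (ZMod 2) V) (x : V) :
    dualChar φ x = if φ x = 0 then 1 else -1 := by
  have h : ∀ a : ZMod 2, a = 0 ∨ a = 1 := by decide
  change (-1 : ℝ) ^ (φ x).val = _
  rcases h (φ x) with h | h <;> simp [h, ZMod.val_one]

lemma abs_dualChar (φ : Module.Dual (ZMod 2) V) (x : V) : |dualChar φ x| = 1 := by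
  rw [dualChar_apply]
  split_ifs <;> norm_num

lemma dualChar_zero_left (x : V) : dualChar 0 x = 1 := by
  simp [dualChar_apply]

lemma dualChar_add_left (φ ψ : Module.Dual (ZMod 2) V) (x : V) :
    dualChar (φ + ψ) x = dualChar φ x * dualChar ψ x :=
  AddChar.map_add_eq_mul (dualChar (Module.Dual.eval (ZMod 2) V x)) φ ψ

lemma dualChar_sum_left {ι : Type*} (s : Finset ι) (φ : ι → Module.Dual (ZMod 2) V) (x : V) :
    dualChar (∑ i ∈ s, φ i) x = ∏ i ∈ s, dualChar (φ i) x :=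
  addChar_map_sum_eq_prod (dualChar (Module.Dual.eval (ZMod 2) V x)) φ s

lemma dualChar_eq_zero_iff (φ : Module.Dual (ZMod 2) V) : dualChar φ = 0 ↔ φ = 0 := by
  refine ⟨fun h => LinearMap.ext fun x => ?_, fun h => ?_⟩
  · change φ x = 0
    by_contra hx
    have hχ : dualChar φ x = 1 := by rw [h, AddChar.zero_apply]
    rw [dualChar_apply, if_neg hx] at hχ
    norm_num at hχ
  · subst h
    ext x
    simp [dualChar_zero_left]

variable [Fintype V]

noncomputable instance : Fintype (Module.Dual (ZMod 2) V) :=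
  have : Finite (Module.Dual (ZMod 2) V) := DFunLike.finite _
  Fintype.ofFinite _

lemma expect_dualChar [DecidableEq (Module.Dual (ZMod 2) V)] (φ : Module.Dual (ZMod 2) V) :
    𝔼 x, dualChar φ x = if φ = 0 then 1 else 0 := by
  classical
  rw [AddChar.expect_eq_ite]
  simp only [dualChar_eq_zero_iff]

lemma sum_dualChar [DecidableEq V] (x : V) :
    ∑ φ : Module.Dual (ZMod 2) V, dualChar φ x = if x = 0 then (Fintype.card V : ℝ) else 0 := by
  classical
  have hcard : Fintype.card (Module.Dual (ZMod 2) V) = Fintype.card V := by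
    rw [Module.card_eq_pow_finrank (K := ZMod 2) (V := V),
      Module.card_eq_pow_finrank (K := ZMod 2) (V := Module.Dual (ZMod 2) V),
      Subspace.dual_finrank_eq]
  have h := AddChar.sum_eq_ite (dualChar (Module.Dual.eval (ZMod 2) V x))
  simp only [dualChar_eq_zero_iff, Module.eval_apply_eq_zero_iff, hcard] at h
  exact h

lemma sum_sq_expect_mul_dualChar (h : V → ℝ) (z : V) :
    ∑ φ, (𝔼 x, h x * dualChar φ x) ^ 2 * dualChar φ z = 𝔼 x, h x * h (x + z) := by
  classical
  have expand (φ : Module.Dual (ZMod 2) V) : (𝔼 x, h x * dualChar φ x) ^ 2 * dualChar φ z =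
      𝔼 x, 𝔼 y, h x * h y * dualChar φ (x + z + y) := by
    rw [sq, expect_mul_expect, expect_mul]
    refine expect_congr rfl fun x _ => ?_
    rw [expect_mul]
    refine expect_congr rfl fun y _ => ?_
    simp only [AddChar.map_add_eq_mul]
    ring
  simp only [expand]
  rw [← expect_sum_comm]
  refine expect_congr rfl fun x _ => ?_
  rw [← expect_sum_comm]
  simp only [← mul_sum, sum_dualChar, add_eq_zero_iff_eq_neg, ZModModule.neg_eq_self]
  rw [Fintype.expect_eq_sum_div_card]
  simp [Fintype.card_ne_zero]

lemma sum_sq_expect_mul_dualChar_eq_expect_sq (h : V → ℝ) :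
    ∑ φ, (𝔼 x, h x * dualChar φ x) ^ 2 = 𝔼 x, h x ^ 2 := by
  simpa [sq] using sum_sq_expect_mul_dualChar h 0

/-- The Fourier coefficient at `φ` of the uniform probability measure on `A`. -/
noncomputable def charMean (A : Finset V) (φ : Module.Dual (ZMod 2) V) : ℝ :=
  𝔼 a ∈ A, dualChar φ a

omit [Fintype V] in
lemma charMean_zero {A : Finset V} (hA : A.Nonempty) : charMean A 0 = 1 := by
  simp only [charMean, dualChar_zero_left]
  exact expect_const hA 1

omit [Fintype V] in
lemma abs_charMean_le_one (A : Finset V) (φ : Module.Dual (ZMod 2) V) : |charMean A φ| ≤ 1 := by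
  obtain rfl | hA := A.eq_empty_or_nonempty
  · simp [charMean]
  · refine (abs_expect_le ..).trans (expect_le hA fun a _ => (abs_dualChar φ a).le)

variable [DecidableEq V]

omit [AddCommGroup V] [Module (ZMod 2) V] in
lemma expect_boole_mem_eq_dens (A : Finset V) :
    𝔼 x, (if x ∈ A then (1 : ℝ) else 0) = A.dens := by
  rw [expect_boole_eq_dens, filter_univ_mem]

lemma expect_boole_mem_mul_dualChar (A : Finset V) (φ : Module.Dual (ZMod 2) V) :
    𝔼 x, (if x ∈ A then (1 : ℝ) else 0) * dualChar φ x = A.dens * charMean A φ := by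
  simp only [ite_mul, one_mul, zero_mul]
  rw [Fintype.expect_ite_mem, charMean, NNRat.smul_def]

lemma autocorr_eq_sum_charMean_sq {A : Finset V} (hA : A.Nonempty) (x : V) :
    autocorr A x = ∑ φ, charMean A φ ^ 2 * dualChar φ x := by
  have : (0 : ℝ) < A.dens := mod_cast hA.dens_pos
  have h := sum_sq_expect_mul_dualChar (fun a => if a ∈ A then (1 : ℝ) else 0) x
  have hcorr : 𝔼 a, (if a ∈ A then (1 : ℝ) else 0) * (if a + x ∈ A then 1 else 0) =
      autocorr A x * A.dens ^ 2 := by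
    simp only [← dens_filter_add_mem, ite_mul, one_mul, zero_mul, ← ite_and]
    rw [expect_boole_eq_dens]
    congr 2
    ext a
    simp only [mem_filter, mem_univ, true_and]
  rw [hcorr] at h
  simp only [expect_boole_mem_mul_dualChar, mul_pow, mul_assoc, ← mul_sum] at h
  rw [mul_comm] at h
  exact (mul_right_cancel₀ (by positivity) h).symm

omit [DecidableEq V] in
lemma sum_charMean_sq {A : Finset V} (hA : A.Nonempty) :
    ∑ φ, charMean A φ ^ 2 = (A.dens : ℝ)⁻¹ := by
  classical
  have h := autocorr_eq_sum_charMean_sq hA 0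
  simp only [AddChar.map_zero_eq_one, mul_one] at h
  rw [← h, autocorr]
  simp [sq]

omit [DecidableEq V] in
lemma abs_expect_sum_pow_mul_dualChar_le {c d : Module.Dual (ZMod 2) V → ℝ}
    (hcd : ∀ φ, |c φ| ≤ d φ) (p : ℕ) (ψ : Module.Dual (ZMod 2) V) :
    |𝔼 x, (∑ φ, c φ * dualChar φ x) ^ p * dualChar ψ x| ≤
      𝔼 x, (∑ φ, d φ * dualChar φ x) ^ p * dualChar ψ x := by
  classical
  induction p generalizing ψ with
  | zero =>
    simp only [pow_zero, one_mul, expect_dualChar]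
    split_ifs <;> simp
  | succ p ih =>
    have step (e : Module.Dual (ZMod 2) V → ℝ) :
        𝔼 x, (∑ φ, e φ * dualChar φ x) ^ (p + 1) * dualChar ψ x =
          ∑ φ, e φ * 𝔼 x, (∑ φ, e φ * dualChar φ x) ^ p * dualChar (φ + ψ) x := by
      simp only [mul_expect]
      rw [← expect_sum_comm]
      refine expect_congr rfl fun x _ => ?_
      rw [pow_succ, mul_sum, sum_mul]
      refine sum_congr rfl fun φ _ => ?_
      rw [dualChar_add_left]
      ring
    rw [step, step]
    refine (abs_sum_le_sum_abs _ _).trans (sum_le_sum fun φ _ => ?_)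
    rw [abs_mul]
    exact mul_le_mul (hcd φ) (ih _) (abs_nonneg _) ((abs_nonneg _).trans (hcd φ))

-- The Fourier coefficients of `2 - autocorr A` are dominated in absolute value by those of
-- `autocorr A`, which are nonnegative and equal to `1` at `0`.
lemma dens_mul_two_pow_le_expect_autocorr_pow {A C : Finset V} (hA : A.Nonempty)
    (hC : ∀ x ∈ C, autocorr A x = 0) {p : ℕ} (hp : Even p) :
    C.dens * 2 ^ p ≤ 𝔼 x, autocorr A x ^ p := by
  classical
  let c (φ : Module.Dual (ZMod 2) V) : ℝ := (if φ = 0 then 2 else 0) - charMean A φ ^ 2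
  have hc (φ) : |c φ| ≤ charMean A φ ^ 2 := by
    simp only [c]
    split_ifs with h
    · rw [h, charMean_zero hA]; norm_num
    · rw [zero_sub, abs_neg, abs_sq]
  have hsum (x : V) : ∑ φ, c φ * dualChar φ x = 2 - autocorr A x := by
    simp [c, sub_mul, autocorr_eq_sum_charMean_sq hA, dualChar_zero_left]
  have hmaj := (le_abs_self _).trans (abs_expect_sum_pow_mul_dualChar_le hc p 0)
  simp only [dualChar_zero_left, mul_one, hsum, ← autocorr_eq_sum_charMean_sq hA] at hmaj
  refine le_trans ?_ hmaj
  rw [← expect_boole_mem_eq_dens C, expect_mul]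
  refine expect_le_expect fun x _ => ?_
  split_ifs with hx
  · rw [hC x hx, sub_zero, one_mul]
  · rw [zero_mul]
    exact hp.pow_nonneg _

end Fourier

section SpectralMass

variable {V : Type*} [AddCommGroup V] [Module (ZMod 2) V]

lemma expect_dualChar_sum_sub (X : Finset V) (k : ℕ) (φ : Module.Dual (ZMod 2) V) :
    𝔼 u ∈ Fintype.piFinset fun _ : Fin k => X, 𝔼 v ∈ Fintype.piFinset fun _ : Fin k => X,
      dualChar φ (∑ i, (u i - v i)) = charMean X φ ^ (2 * k) := by
  have hprod (u v : Fin k → V) :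
      dualChar φ (∑ i, (u i - v i)) = (∏ i, dualChar φ (u i)) * ∏ i, dualChar φ (v i) := by
    simp only [ZModModule.sub_eq_add, addChar_map_sum_eq_prod, AddChar.map_add_eq_mul,
      prod_mul_distrib]
  simp only [hprod]
  rw [← expect_mul_expect, ← expect_pow, two_mul, pow_add, charMean]

variable [Fintype V] [DecidableEq V]

lemma expect_autocorr_add_sum_sub {A : Finset V} (hA : A.Nonempty) (B X : Finset V) (k : ℕ) :
    𝔼 u ∈ Fintype.piFinset fun _ : Fin k => X, 𝔼 v ∈ Fintype.piFinset fun _ : Fin k => X,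
      𝔼 b ∈ B, 𝔼 b' ∈ B, autocorr A (b + ∑ i, (u i - v i) + b') =
        ∑ φ, charMean A φ ^ 2 * (charMean B φ ^ 2 * charMean X φ ^ (2 * k)) := by
  have hB (s : V) : 𝔼 b ∈ B, 𝔼 b' ∈ B, autocorr A (b + s + b') =
      ∑ φ, charMean A φ ^ 2 * charMean B φ ^ 2 * dualChar φ s := by
    simp only [autocorr_eq_sum_charMean_sq hA, expect_sum_comm, AddChar.map_add_eq_mul]
    refine sum_congr rfl fun φ _ => ?_
    simp only [← mul_expect, ← expect_mul]
    simp only [← charMean.eq_def]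
    ring
  simp only [hB, expect_sum_comm, ← mul_expect, expect_dualChar_sum_sub, mul_assoc]

omit [Fintype V] [DecidableEq V] in
lemma expect_shiftMean_ite_zero_one {B : Finset V} (hB : B.Nonempty) (p : V → Prop)
    [DecidablePred p] :
    𝔼 b ∈ B, shiftMean B (fun x => if p x then 0 else 1) b =
      1 - 𝔼 b ∈ B, 𝔼 b' ∈ B, (if p (b' - b) then (1 : ℝ) else 0) := by
  have hone (b b' : V) :
      (if p (b + b') then (0 : ℝ) else 1) + (if p (b' - b) then 1 else 0) = 1 := by
    rw [ZModModule.sub_eq_add, add_comm b']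
    split_ifs <;> simp
  refine eq_sub_of_add_eq ?_
  simp only [shiftMean, ← expect_add_distrib, hone, expect_const hB]

lemma exists_le_sum_charMean_sq_mul {A B : Finset V} (hA : A.Nonempty) (hB : B.Nonempty)
    {τ δ ε : ℝ} (hτ : 0 ≤ τ) (hε : 0 < ε) {n k : ℕ} (hn : 0 < n) (hk : 0 < k)
    (hbad : 𝔼 b ∈ B, 𝔼 b' ∈ B, (if autocorr A (b' - b) < τ then (1 : ℝ) else 0) ≤ δ)
    (hnk : 4 * Real.exp (-(n * (ε / (4 * k)) ^ 2 / 2)) ≤ ε / (4 * k) * B.dens) :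
    ∃ X : Finset V, (B.dens : ℝ) ^ n / 2 ≤ X.dens ∧
      τ * (1 - δ - ε) ≤ ∑ φ, charMean A φ ^ 2 * charMean X φ ^ (2 * k) := by
  let f (x : V) : ℝ := if autocorr A x < τ then 0 else 1
  have hf (x : V) : f x ∈ Set.Icc 0 1 := by
    simp only [f]; split_ifs <;> simp
  have hf_le (x : V) : τ * f x ≤ autocorr A x := by
    simp only [f]
    split_ifs with h
    · simpa using autocorr_nonneg A x
    · simpa using h
  obtain ⟨X, hX, hshift⟩ := exists_forall_expect_shiftMean_sub_le hB hf hn hk hε hnk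
  have hXne : X.Nonempty := by
    have : (0 : ℝ) < B.dens := mod_cast hB.dens_pos
    exact nonempty_of_le_dens (by positivity) hX
  have hmean : 1 - δ ≤ 𝔼 b ∈ B, shiftMean B f b := by
    rw [expect_shiftMean_ite_zero_one hB]
    linarith
  refine ⟨X, hX, ?_⟩
  calc τ * (1 - δ - ε)
      ≤ 𝔼 u ∈ Fintype.piFinset fun _ : Fin k => X, 𝔼 v ∈ Fintype.piFinset fun _ : Fin k => X,
          𝔼 b ∈ B, 𝔼 b' ∈ B, autocorr A (b + ∑ i, (u i - v i) + b') := by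
        have hne : (Fintype.piFinset fun _ : Fin k => X).Nonempty :=
          Fintype.piFinset_nonempty.2 fun _ => hXne
        refine le_expect hne fun u hu => le_expect hne fun v hv => ?_
        calc τ * (1 - δ - ε) ≤ τ * 𝔼 b ∈ B, shiftMean B f (b + ∑ i, (u i - v i)) := by
              have := hshift u v (Fintype.mem_piFinset.1 hu) (Fintype.mem_piFinset.1 hv)
              gcongr
              linarith
          _ ≤ _ := by
              simp only [shiftMean, mul_expect]
              exact expect_le_expect fun b _ => expect_le_expect fun b' _ => hf_le _
    _ = ∑ φ, charMean A φ ^ 2 * (charMean B φ ^ 2 * charMean X φ ^ (2 * k)) :=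
        expect_autocorr_add_sum_sub hA B X k
    _ ≤ ∑ φ, charMean A φ ^ 2 * charMean X φ ^ (2 * k) := by
        have hB1 (φ) : charMean B φ ^ 2 ≤ 1 := (sq_le_one_iff_abs_le_one _).2
          (abs_charMean_le_one B φ)
        refine sum_le_sum fun φ _ => mul_le_mul_of_nonneg_left ?_ (sq_nonneg _)
        exact mul_le_of_le_one_left ((even_two_mul k).pow_nonneg _) (hB1 φ)

end SpectralMass

section Chang

lemma dens_mul_exp_expect_le_expect_exp {α : Type*} [Fintype α] {X : Finset α} (hX : X.Nonempty)
    (u : α → ℝ) : X.dens * Real.exp (𝔼 x ∈ X, u x) ≤ 𝔼 x, Real.exp (u x) := by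
  classical
  set m := 𝔼 x ∈ X, u x with hm
  have htangent (x : α) : Real.exp m * (1 + (u x - m)) ≤ Real.exp (u x) :=
    calc Real.exp m * (1 + (u x - m)) ≤ Real.exp m * Real.exp (u x - m) := by
          gcongr
          linarith [Real.add_one_le_exp (u x - m)]
      _ = Real.exp (u x) := by rw [← Real.exp_add, add_sub_cancel]
  have hjensen : Real.exp m ≤ 𝔼 x ∈ X, Real.exp (u x) := by
    refine le_of_eq_of_le ?_ (expect_le_expect fun x _ => htangent x)
    rw [← mul_expect, expect_add_distrib, expect_sub_distrib, expect_const hX, expect_const hX,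
      ← hm, sub_self, add_zero, mul_one]
  calc X.dens * Real.exp m ≤ X.dens * 𝔼 x ∈ X, Real.exp (u x) := by gcongr
    _ = 𝔼 x, if x ∈ X then Real.exp (u x) else 0 := by
        rw [Fintype.expect_ite_mem, NNRat.smul_def]
    _ ≤ 𝔼 x, Real.exp (u x) := expect_le_expect fun x _ => by
        split_ifs
        exacts [le_rfl, (Real.exp_pos _).le]

variable {V : Type*} [AddCommGroup V] [Module (ZMod 2) V] [Fintype V]

lemma expect_prod_add_mul_dualChar {b : Finset (Module.Dual (ZMod 2) V)}
    (hb : LinearIndepOn (ZMod 2) id (b : Set (Module.Dual (ZMod 2) V)))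
    (c d : Module.Dual (ZMod 2) V → ℝ) :
    𝔼 x, ∏ φ ∈ b, (c φ + d φ * dualChar φ x) = ∏ φ ∈ b, c φ := by
  classical
  have hterm {s : Finset (Module.Dual (ZMod 2) V)} (hne : b \ s ≠ ∅) :
      𝔼 x, (∏ φ ∈ s, c φ) * ∏ φ ∈ b \ s, (d φ * dualChar φ x) = 0 := by
    have hsum : ∑ φ ∈ b \ s, φ ≠ 0 := by
      intro hz
      obtain ⟨φ, hφ⟩ := nonempty_iff_ne_empty.2 hne
      have hcoeff := linearIndepOn_finset_iff.1 hb (fun φ => if φ ∈ b \ s then 1 else 0) (by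
        simp only [id, ite_smul, one_smul, zero_smul]
        rw [← sum_filter, filter_mem_eq_inter, inter_eq_right.2 sdiff_subset, hz])
        φ (mem_sdiff.1 hφ).1
      rw [if_pos hφ] at hcoeff
      exact one_ne_zero hcoeff
    simp only [prod_mul_distrib, ← dualChar_sum_left, ← mul_expect, expect_dualChar, if_neg hsum,
      mul_zero]
  simp only [prod_add]
  rw [expect_sum_comm, sum_eq_single_of_mem b (mem_powerset_self b)]
  · simp
  · intro s hs hsb
    have hsub := mem_powerset.1 hs
    exact hterm fun h => hsb (hsub.antisymm (sdiff_eq_empty_iff_subset.1 h))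

lemma expect_exp_mul_sum_dualChar_le {b : Finset (Module.Dual (ZMod 2) V)}
    (hb : LinearIndepOn (ZMod 2) id (b : Set (Module.Dual (ZMod 2) V)))
    {e : Module.Dual (ZMod 2) V → ℝ} (he : ∀ φ, |e φ| ≤ 1) (l : ℝ) :
    𝔼 x, Real.exp (l * ∑ φ ∈ b, e φ * dualChar φ x) ≤ Real.exp (#b * l ^ 2 / 2) := by
  calc 𝔼 x, Real.exp (l * ∑ φ ∈ b, e φ * dualChar φ x)
      ≤ 𝔼 x, ∏ φ ∈ b, (Real.cosh l + e φ * Real.sinh l * dualChar φ x) := by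
        refine expect_le_expect fun x _ => ?_
        rw [mul_sum, Real.exp_sum]
        refine prod_le_prod (fun _ _ => (Real.exp_pos _).le) fun φ _ => ?_
        have hφ : |e φ * dualChar φ x| ≤ 1 := by
          rw [abs_mul, abs_dualChar, mul_one]
          exact he φ
        linarith [exp_mul_le_cosh_add_mul_sinh hφ l]
    _ = Real.cosh l ^ #b := by rw [expect_prod_add_mul_dualChar hb, prod_const]
    _ ≤ Real.exp (l ^ 2 / 2) ^ #b := by
        gcongr
        exact Real.cosh_le_exp_half_sq l
    _ = Real.exp (#b * l ^ 2 / 2) := by rw [← Real.exp_nat_mul, mul_div_assoc]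

lemma card_le_log_inv_dens_of_linearIndepOn {X : Finset V} (hX : X.Nonempty)
    {ε : ℝ} (hε : 0 < ε) {b : Finset (Module.Dual (ZMod 2) V)}
    (hb : LinearIndepOn (ZMod 2) id (b : Set (Module.Dual (ZMod 2) V)))
    (hlarge : ∀ φ ∈ b, ε ≤ |charMean X φ|) :
    (#b : ℝ) ≤ 2 / ε ^ 2 * Real.log (X.dens : ℝ)⁻¹ := by
  have hdens : (0 : ℝ) < X.dens := mod_cast hX.dens_pos
  let e (φ : Module.Dual (ZMod 2) V) : ℝ := SignType.sign (charMean X φ)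
  have he (φ) : |e φ| ≤ 1 := by
    simp only [e]
    cases SignType.sign (charMean X φ) <;> simp
  have hmean : ε ^ 2 * #b ≤ 𝔼 x ∈ X, ε * ∑ φ ∈ b, e φ * dualChar φ x := by
    calc ε ^ 2 * #b = ε * ∑ _φ ∈ b, ε := by rw [sum_const, nsmul_eq_mul]; ring
      _ ≤ ε * ∑ φ ∈ b, |charMean X φ| := by gcongr with φ hφ; exact hlarge φ hφ
      _ = _ := by
          rw [← mul_expect, expect_sum_comm]
          simp only [← mul_expect, e, ← charMean.eq_def, sign_mul_self]
  have hexp : X.dens * Real.exp (ε ^ 2 * #b) ≤ Real.exp (#b * ε ^ 2 / 2) :=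
    calc X.dens * Real.exp (ε ^ 2 * #b)
        ≤ X.dens * Real.exp (𝔼 x ∈ X, ε * ∑ φ ∈ b, e φ * dualChar φ x) := by gcongr
      _ ≤ _ := (dens_mul_exp_expect_le_expect_exp hX _).trans
          (expect_exp_mul_sum_dualChar_le hb he ε)
  have hlog := Real.log_le_log (by positivity) hexp
  rw [Real.log_mul hdens.ne' (Real.exp_ne_zero _), Real.log_exp, Real.log_exp] at hlog
  rw [Real.log_inv, div_mul_eq_mul_div, le_div_iff₀ (by positivity)]
  linarith

/-- Chang's theorem on the large spectrum. -/
lemma finrank_span_large_charMean_le {X : Finset V} (hX : X.Nonempty) {ε : ℝ}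
    (hε : 0 < ε) :
    (Module.finrank (ZMod 2) (Submodule.span (ZMod 2) {φ | ε ≤ |charMean X φ|}) : ℝ) ≤
      2 / ε ^ 2 * Real.log (X.dens : ℝ)⁻¹ := by
  classical
  obtain ⟨b, hsub, hspan, hli⟩ := exists_linearIndependent (ZMod 2) {φ | ε ≤ |charMean X φ|}
  have hli' : LinearIndepOn (ZMod 2) id (b.toFinset : Set (Module.Dual (ZMod 2) V)) := by
    rwa [Set.coe_toFinset]
  rw [← hspan, ← Set.coe_toFinset b, finrank_span_finset_eq_card hli']
  exact card_le_log_inv_dens_of_linearIndepOn hX hε hli' fun φ hφ => hsub (Set.mem_toFinset.1 hφ)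

end Chang

section Slice

variable {V : Type*} [AddCommGroup V] [Module (ZMod 2) V] [Fintype V] [DecidableEq V]

noncomputable instance (W : Submodule (ZMod 2) V) : Fintype W := Fintype.ofFinite W

/-- The part of `A` in the coset `x + W`, translated into the subspace `W`. -/
noncomputable def slice (A : Finset V) (W : Submodule (ZMod 2) V) (x : V) : Finset W :=
  {w | x + w ∈ A}

lemma mem_slice {A : Finset V} {W : Submodule (ZMod 2) V} {x : V} {w : W} :
    w ∈ slice A W x ↔ x + w ∈ A := by
  simp [slice]

lemma expect_dens_slice_mul_dualChar (A : Finset V) {W : Submodule (ZMod 2) V}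
    {φ : Module.Dual (ZMod 2) V} (hφ : φ ∈ W.dualAnnihilator) :
    𝔼 x, (slice A W x).dens * dualChar φ x = A.dens * charMean A φ := by
  have hinv (w : W) (x : V) : dualChar φ (x + w) = dualChar φ x := by
    rw [dualChar_apply, map_add, (Submodule.mem_dualAnnihilator φ).1 hφ w w.2, add_zero,
      dualChar_apply]
  have htranslate (w : W) : 𝔼 x : V, (if x + w ∈ A then (1 : ℝ) else 0) * dualChar φ x =
      A.dens * charMean A φ := by
    rw [← expect_boole_mem_mul_dualChar]
    refine Fintype.expect_equiv (Equiv.addRight (w : V)) _ _ fun x => ?_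
    rw [Equiv.coe_addRight, hinv]
  simp only [slice, ← expect_boole_eq_dens, expect_mul]
  rw [expect_comm]
  simp only [htranslate, Fintype.expect_const]

lemma sum_charMean_sq_le_of_dens_slice_le {A : Finset V} (hA : A.Nonempty)
    {W : Submodule (ZMod 2) V} {κ : ℝ} (hκ : ∀ x, (slice A W x).dens ≤ κ * A.dens)
    {T : Finset (Module.Dual (ZMod 2) V)} (hT : ∀ φ ∈ T, φ ∈ W.dualAnnihilator) :
    ∑ φ ∈ T, charMean A φ ^ 2 ≤ κ := by
  have : (0 : ℝ) < A.dens := mod_cast hA.dens_pos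
  have hmean : 𝔼 x, ((slice A W x).dens : ℝ) = A.dens := by
    simpa [dualChar_zero_left, charMean_zero hA] using
      expect_dens_slice_mul_dualChar A W.dualAnnihilator.zero_mem
  have hmass : A.dens ^ 2 * ∑ φ ∈ T, charMean A φ ^ 2 ≤ A.dens ^ 2 * κ := by
    calc A.dens ^ 2 * ∑ φ ∈ T, charMean A φ ^ 2
        = ∑ φ ∈ T, (𝔼 x, (slice A W x).dens * dualChar φ x) ^ 2 := by
          rw [mul_sum]
          refine sum_congr rfl fun φ hφ => ?_
          rw [expect_dens_slice_mul_dualChar A (hT φ hφ), mul_pow]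
      _ ≤ ∑ φ, (𝔼 x, (slice A W x).dens * dualChar φ x) ^ 2 :=
          sum_le_univ_sum_of_nonneg fun _ => sq_nonneg _
      _ = 𝔼 x, ((slice A W x).dens : ℝ) ^ 2 := sum_sq_expect_mul_dualChar_eq_expect_sq _
      _ ≤ 𝔼 x, κ * A.dens * (slice A W x).dens := by
          refine expect_le_expect fun x _ => ?_
          rw [sq]
          gcongr
          exact hκ x
      _ = A.dens ^ 2 * κ := by rw [← mul_expect, hmean]; ring
  exact le_of_mul_le_mul_left hmass (by positivity)

lemma exists_lt_dens_slice {A X : Finset V} (hA : A.Nonempty) (hX : X.Nonempty) {k : ℕ} {ε κ : ℝ}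
    (hε : 0 < ε)
    (hmass : κ + ε ^ (2 * k) * (A.dens : ℝ)⁻¹ < ∑ φ, charMean A φ ^ 2 * charMean X φ ^ (2 * k)) :
    ∃ W : Submodule (ZMod 2) V,
      (Module.finrank (ZMod 2) V : ℝ) ≤
        Module.finrank (ZMod 2) W + 2 / ε ^ 2 * Real.log (X.dens : ℝ)⁻¹ ∧
      ∃ x, κ * A.dens < (slice A W x).dens := by
  classical
  set S := Submodule.span (ZMod 2) {φ | ε ≤ |charMean X φ|}
  refine ⟨S.dualCoannihilator, ?_, ?_⟩
  · rw [← Subspace.finrank_add_finrank_dualCoannihilator_eq S, Nat.cast_add, add_comm]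
    gcongr
    exact finrank_span_large_charMean_le hX hε
  by_contra! hslice
  have hlarge : ∑ φ with ε ≤ |charMean X φ|, charMean A φ ^ 2 ≤ κ := by
    refine sum_charMean_sq_le_of_dens_slice_le hA hslice fun φ hφ => ?_
    exact Submodule.le_dualCoannihilator_dualAnnihilator S
      (Submodule.subset_span (mem_filter.1 hφ).2)
  have hpoint (φ) : charMean A φ ^ 2 * charMean X φ ^ (2 * k) ≤
      (if ε ≤ |charMean X φ| then charMean A φ ^ 2 else 0) + ε ^ (2 * k) * charMean A φ ^ 2 := by
    have hX1 := pow_le_one₀ (n := 2 * k) (abs_nonneg _) (abs_charMean_le_one X φ)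
    rw [← (even_two_mul k).pow_abs]
    split_ifs with hφ
    · exact (mul_le_of_le_one_right (sq_nonneg _) hX1).trans
        (le_add_of_nonneg_right (by positivity))
    · rw [zero_add, mul_comm]
      gcongr
      exact (not_le.1 hφ).le
  refine hmass.not_ge ((sum_le_sum fun φ _ => hpoint φ).trans ?_)
  rw [sum_add_distrib, ← sum_filter, ← mul_sum, sum_charMean_sq hA]
  gcongr

end Slice

section Increment

variable {V : Type*} [AddCommGroup V] [Module (ZMod 2) V] [Fintype V] [DecidableEq V]

lemma exists_dens_of_forall_add_notMem {t : ℕ} (ht : 1 ≤ t) {A C : Finset V}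
    (hA : (1 / 2 : ℝ) ^ t ≤ A.dens) (hC : (1 / 2 : ℝ) ^ t ≤ C.dens)
    (hAC : ∀ a ∈ A, ∀ x ∈ C, a + x ∉ A) :
    ∃ B : Finset V, (1 / 2 : ℝ) ^ (18 * t ^ 2) ≤ B.dens ∧
      𝔼 b ∈ B, 𝔼 b' ∈ B, (if autocorr A (b' - b) < 3 / 2 then (1 : ℝ) else 0) ≤ 1 / 16 := by
  have hAne : A.Nonempty := nonempty_of_le_dens (by positivity) hA
  have hmom : 1 + 16 * (3 / 2 : ℝ) ^ (18 * t) ≤ 𝔼 x, autocorr A x ^ (18 * t) := by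
    have hone : (1 : ℝ) ≤ ((3 / 2) ^ 18) ^ t := one_le_pow₀ (by norm_num)
    have h17 : (17 : ℝ) ≤ 17 ^ t := le_self_pow₀ (by norm_num) (by omega)
    calc 1 + 16 * (3 / 2 : ℝ) ^ (18 * t) ≤ 17 ^ t * ((3 / 2) ^ 18) ^ t := by
          rw [pow_mul]
          nlinarith
      _ = (17 * (3 / 2) ^ 18) ^ t := (mul_pow ..).symm
      _ ≤ (1 / 2 * 2 ^ 18) ^ t := by gcongr ?_ ^ t; norm_num
      _ = (1 / 2) ^ t * 2 ^ (18 * t) := by rw [mul_pow, pow_mul]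
      _ ≤ C.dens * 2 ^ (18 * t) := by gcongr
      _ ≤ _ := dens_mul_two_pow_le_expect_autocorr_pow hAne
          (fun x hx => autocorr_eq_zero fun a ha => hAC a ha x hx)
          (Even.mul_right (by decide) t)
  obtain ⟨B, hB, hbad⟩ :=
    exists_dens_of_autocorr_moment hAne (by norm_num) (by norm_num) hmom
  refine ⟨B, le_trans ?_ hB, by linarith⟩
  calc (1 / 2 : ℝ) ^ (18 * t ^ 2) = ((1 / 2) ^ t) ^ (18 * t) := by rw [← pow_mul]; ring_nf
    _ ≤ _ := by gcongr

lemma exp_neg_le_half_pow (m : ℕ) : Real.exp (-m) ≤ (1 / 2) ^ m := by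
  have h : Real.exp (-1) ≤ 1 / 2 := by
    rw [Real.exp_neg, one_div]
    exact inv_anti₀ two_pos (by linarith [Real.add_one_le_exp 1])
  calc Real.exp (-m) = Real.exp (-1) ^ m := by rw [← Real.exp_nat_mul]; simp
    _ ≤ _ := by gcongr

lemma log_inv_le_of_half_pow_le {x : ℝ} {m : ℕ} (h : (1 / 2) ^ m ≤ x) : Real.log x⁻¹ ≤ m := by
  have hle := Real.log_le_log (Real.exp_pos _) ((exp_neg_le_half_pow m).trans h)
  rw [Real.log_exp] at hle
  rw [Real.log_inv]
  linarith

lemma four_mul_exp_le_mul_half_pow {t : ℕ} (ht : 1 ≤ t) :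
    4 * Real.exp (-((10 ^ 8 * t ^ 4 : ℕ) * (1 / 16 / (4 * (3 * t : ℕ))) ^ 2 / 2)) ≤
      1 / 16 / (4 * (3 * t : ℕ)) * (1 / 2) ^ (18 * t ^ 2) := by
  have ht' : (1 : ℝ) ≤ t := mod_cast ht
  have hexponent : 768 * (t : ℝ) + (18 * t ^ 2 : ℕ) ≤
      (10 ^ 8 * t ^ 4 : ℕ) * (1 / 16 / (4 * (3 * t : ℕ))) ^ 2 / 2 := by
    have : ((10 ^ 8 * t ^ 4 : ℕ) * (1 / 16 / (4 * (3 * t : ℕ))) ^ 2 / 2 : ℝ) =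
        10 ^ 8 / 73728 * (t : ℝ) ^ 2 := by
      push_cast
      field_simp
      norm_num
    rw [this]
    push_cast
    nlinarith
  have hinv : Real.exp (-(768 * t)) ≤ (768 * (t : ℝ))⁻¹ := by
    rw [Real.exp_neg]
    exact inv_anti₀ (by positivity) (by linarith [Real.add_one_le_exp (768 * (t : ℝ))])
  calc _ ≤ 4 * (Real.exp (-(768 * t)) * Real.exp (-(18 * t ^ 2 : ℕ))) := by
        rw [← Real.exp_add, ← neg_add]
        gcongr
    _ ≤ 4 * ((768 * (t : ℝ))⁻¹ * (1 / 2) ^ (18 * t ^ 2)) := by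
        gcongr
        exact exp_neg_le_half_pow _
    _ = _ := by
        push_cast
        field_simp
        norm_num

lemma exists_six_fifths_mul_dens_lt_dens_slice {t : ℕ} (ht : 1 ≤ t) {A C : Finset V}
    (hA : (1 / 2 : ℝ) ^ t ≤ A.dens) (hC : (1 / 2 : ℝ) ^ t ≤ C.dens)
    (hAC : ∀ a ∈ A, ∀ x ∈ C, a + x ∉ A) :
    ∃ W : Submodule (ZMod 2) V,
      Module.finrank (ZMod 2) V ≤ Module.finrank (ZMod 2) W + 2 * 10 ^ 10 * t ^ 6 ∧
      ∃ x, (6 / 5 : ℝ) * A.dens < (slice A W x).dens := by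
  have hAne := nonempty_of_le_dens (by positivity) hA
  obtain ⟨B, hB, hbad⟩ := exists_dens_of_forall_add_notMem ht hA hC hAC
  obtain ⟨X, hX, hmass⟩ := exists_le_sum_charMean_sq_mul (τ := 3 / 2) (ε := 1 / 16)
    (n := 10 ^ 8 * t ^ 4) (k := 3 * t) hAne (nonempty_of_le_dens (by positivity) hB)
    (by norm_num) (by norm_num) (by positivity) (by positivity) hbad
    ((four_mul_exp_le_mul_half_pow ht).trans (by gcongr))
  have hXdens : (1 / 2 : ℝ) ^ (18 * 10 ^ 8 * t ^ 6 + 1) ≤ X.dens :=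
    calc (1 / 2 : ℝ) ^ (18 * 10 ^ 8 * t ^ 6 + 1)
        = ((1 / 2) ^ (18 * t ^ 2)) ^ (10 ^ 8 * t ^ 4) / 2 := by
          rw [← pow_mul]
          ring
      _ ≤ (B.dens : ℝ) ^ (10 ^ 8 * t ^ 4) / 2 := by gcongr
      _ ≤ X.dens := hX
  have hsmall : (1 / 2 : ℝ) ^ (2 * (3 * t)) * (A.dens : ℝ)⁻¹ ≤ 1 / 32 := by
    rw [← div_eq_mul_inv, div_le_iff₀ (by positivity)]
    calc (1 / 2 : ℝ) ^ (2 * (3 * t)) = (1 / 32) ^ t * (1 / 2) ^ t := by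
          rw [← mul_assoc, pow_mul, ← mul_pow]; norm_num
      _ ≤ 1 / 32 * A.dens := by
          gcongr
          exact pow_le_of_le_one (by norm_num) (by norm_num) (by omega)
  obtain ⟨W, hW, hx⟩ := exists_lt_dens_slice (k := 3 * t) (ε := 1 / 2) (κ := 6 / 5) hAne
    (nonempty_of_le_dens (by positivity) hXdens) (by norm_num) (by linarith)
  refine ⟨W, ?_, hx⟩
  have hlog : Real.log (X.dens : ℝ)⁻¹ ≤ 18 * 10 ^ 8 * (t : ℝ) ^ 6 + 1 :=
    (log_inv_le_of_half_pow_le hXdens).trans_eq (by norm_num)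
  have hone : (1 : ℝ) ≤ (t : ℝ) ^ 6 := one_le_pow₀ (mod_cast ht)
  rify
  linarith

end Increment

section Ramsey

variable {V : Type*} [AddCommGroup V] [Module (ZMod 2) V]

lemma eq_zero_or_eq_of_mem_span_singleton {u v : V}
    (hu : u ∈ Submodule.span (ZMod 2) {v}) : u = 0 ∨ u = v := by
  obtain ⟨r, rfl⟩ := Submodule.mem_span_singleton.1 hu
  fin_cases r
  · exact Or.inl (zero_smul _ v)
  · exact Or.inr (one_smul _ v)

lemma mem_or_add_mem_of_mem_sup_span_singleton {U : Submodule (ZMod 2) V} {v w : V}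
    (hw : w ∈ U ⊔ Submodule.span (ZMod 2) {v}) : w ∈ U ∨ w + v ∈ U := by
  obtain ⟨u, hu, y, hy, rfl⟩ := Submodule.mem_sup.1 hw
  rcases eq_zero_or_eq_of_mem_span_singleton hy with rfl | rfl
  · exact Or.inl (by rwa [add_zero])
  · exact Or.inr (by rwa [add_assoc, ZModModule.add_self, add_zero])

lemma exists_finrank_succ_disjoint [Fintype V] {R : Finset V}
    {U : Submodule (ZMod 2) V} (hU : ∀ u ∈ U, u ∉ R)
    (hcard : (#R + 1) * 2 ^ Module.finrank (ZMod 2) U < Fintype.card V) :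
    ∃ U' : Submodule (ZMod 2) V,
      Module.finrank (ZMod 2) U' = Module.finrank (ZMod 2) U + 1 ∧ ∀ u ∈ U', u ∉ R := by
  classical
  have hUcard : #(U : Set V).toFinset = 2 ^ Module.finrank (ZMod 2) U := by
    rw [Set.toFinset_card, ← Nat.card_eq_fintype_card]
    simpa using Module.natCard_eq_pow_finrank (K := ZMod 2) (V := U)
  obtain ⟨v, hv⟩ : ∃ v, v ∉ image₂ (· + ·) (insert 0 R) (U : Set V).toFinset := by
    by_contra! hall
    rw [← card_univ, ← eq_univ_iff_forall.2 hall] at hcard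
    refine hcard.not_ge ((card_image₂_le ..).trans ?_)
    rw [hUcard]
    gcongr
    exact card_insert_le 0 R
  replace hv : ∀ r ∈ insert 0 R, r + v ∉ U := fun r hr hrv =>
    hv (mem_image₂.2 ⟨r, hr, r + v, by simpa using hrv, by
      rw [← add_assoc, ZModModule.add_self, zero_add]⟩)
  refine ⟨U ⊔ Submodule.span (ZMod 2) {v}, ?_, fun w hw hwR => ?_⟩
  · refine Submodule.finrank_sup_span_singleton fun hvU => hv 0 (mem_insert_self ..) ?_
    rwa [zero_add]
  · rcases mem_or_add_mem_of_mem_sup_span_singleton hw with hwU | hwU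
    · exact hU w hwU hwR
    · exact hv w (mem_insert_of_mem hwR) hwU

lemma exists_finrank_eq_disjoint_of_dens_lt [Fintype V] {R : Finset V} (h0 : (0 : V) ∉ R) {t : ℕ}
    (ht : t ≤ Module.finrank (ZMod 2) V) (hR : (R.dens : ℝ) < (1 / 2) ^ t) :
    ∃ U : Submodule (ZMod 2) V, Module.finrank (ZMod 2) U = t ∧ ∀ u ∈ U, u ∉ R := by
  induction t with
  | zero => exact ⟨⊥, finrank_bot .., fun u hu => by rwa [(Submodule.mem_bot _).1 hu]⟩
  | succ t ih =>
    obtain ⟨U, rfl, hU⟩ := ih (by omega)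
      (hR.trans_le (pow_le_pow_of_le_one (by norm_num) (by norm_num) t.le_succ))
    have hV : Fintype.card V = 2 ^ Module.finrank (ZMod 2) V := by
      simpa using Module.card_eq_pow_finrank (K := ZMod 2) (V := V)
    have hRcard : #R * 2 ^ (Module.finrank (ZMod 2) U + 1) < Fintype.card V := by
      have hVpos : (0 : ℝ) < Fintype.card V := mod_cast Fintype.card_pos
      rw [dens, NNRat.cast_div, NNRat.cast_natCast, NNRat.cast_natCast, one_div, inv_pow,
        ← one_div, div_lt_div_iff₀ hVpos (by positivity), one_mul] at hR
      exact_mod_cast hR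
    have hUcard : 2 ^ Module.finrank (ZMod 2) U < Fintype.card V := by
      rw [hV]
      exact Nat.pow_lt_pow_right one_lt_two ht
    refine exists_finrank_succ_disjoint hU ?_
    rcases (#R).eq_zero_or_pos with hzero | hpos
    · simpa [hzero] using hUcard
    · refine lt_of_le_of_lt ?_ hRcard
      rw [pow_succ', ← mul_assoc]
      gcongr
      omega

lemma half_pow_le_dens_of_forall_finrank_eq [Fintype V] {R : Finset V} (h0 : (0 : V) ∉ R) {t : ℕ}
    (ht : t ≤ Module.finrank (ZMod 2) V)
    (hR : ∀ U : Submodule (ZMod 2) V, Module.finrank (ZMod 2) U = t → ∃ u ∈ U, u ∈ R) :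
    (1 / 2 : ℝ) ^ t ≤ R.dens := by
  by_contra! hlt
  obtain ⟨U, hU, hUR⟩ := exists_finrank_eq_disjoint_of_dens_lt h0 ht hlt
  obtain ⟨u, hu, huR⟩ := hR U hU
  exact hUR u hu huR

lemma finrank_lt_of_density_increment [Fintype V] {t : ℕ} (ht : 1 ≤ t)
    {R A : Finset V} (h0 : (0 : V) ∉ R)
    (hR : ∀ U : Submodule (ZMod 2) V, Module.finrank (ZMod 2) U = t → ∃ u ∈ U, u ∈ R)
    (hRA : ∀ a ∈ A, ∀ r ∈ R, a + r ∉ A) (hA : (1 / 2 : ℝ) ^ t ≤ A.dens) {j : ℕ}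
    (hj : 1 < (6 / 5 : ℝ) ^ j * A.dens) :
    Module.finrank (ZMod 2) V < t + j * (2 * 10 ^ 10 * t ^ 6) := by
  classical
  induction j generalizing V with
  | zero =>
    rw [pow_zero, one_mul] at hj
    exact absurd hj (not_lt.2 (mod_cast A.dens_le_one))
  | succ j ih =>
    by_contra! hV
    have hRdens : (1 / 2 : ℝ) ^ t ≤ R.dens :=
      half_pow_le_dens_of_forall_finrank_eq h0 (by omega) hR
    obtain ⟨W, hW, x, hx⟩ := exists_six_fifths_mul_dens_lt_dens_slice ht hA hRdens hRA
    have hlt : Module.finrank (ZMod 2) W < t + j * (2 * 10 ^ 10 * t ^ 6) := by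
      refine ih (R := slice R W 0) (A := slice A W x) ?_ (fun U hU => ?_) ?_ ?_ ?_
      · simpa [mem_slice] using h0
      · obtain ⟨_, ⟨w, hw, rfl⟩, hwR⟩ :=
          hR (U.map W.subtype) (by rwa [Submodule.finrank_map_subtype_eq])
        exact ⟨w, hw, by simpa [mem_slice] using hwR⟩
      · intro a ha r hr
        rw [mem_slice] at ha hr ⊢
        rw [zero_add] at hr
        rw [Submodule.coe_add, ← add_assoc]
        exact hRA _ ha _ hr
      · have : (0 : ℝ) ≤ A.dens := by positivity
        linarith
      · refine hj.trans_le ?_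
        rw [pow_succ, mul_assoc]
        gcongr
    linarith

lemma exists_finrank_eq_disjoint_of_sum_free [Finite V] {t : ℕ} (ht : 1 ≤ t)
    (hV : 10 ^ 11 * t ^ 7 ≤ Module.finrank (ZMod 2) V) {R : Finset V} (h0 : (0 : V) ∉ R)
    (hsum : ∀ a ∈ R, ∀ b ∈ R, a + b ∉ R) :
    ∃ U : Submodule (ZMod 2) V, Module.finrank (ZMod 2) U = t ∧ ∀ u ∈ U, u ∉ R := by
  have := Fintype.ofFinite V
  by_contra! hmeet
  have htV : t + 4 * t * (2 * 10 ^ 10 * t ^ 6) ≤ Module.finrank (ZMod 2) V := by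
    have : t ≤ t ^ 7 := Nat.le_self_pow (by norm_num) t
    linarith
  have hdens : (1 / 2 : ℝ) ^ t ≤ R.dens :=
    half_pow_le_dens_of_forall_finrank_eq h0 (le_of_add_le_left htV) hmeet
  have hgrow : 1 < (6 / 5 : ℝ) ^ (4 * t) * R.dens :=
    calc (1 : ℝ) < ((6 / 5) ^ 4 * (1 / 2)) ^ t := one_lt_pow₀ (by norm_num) (by omega)
      _ = (6 / 5) ^ (4 * t) * (1 / 2) ^ t := by rw [mul_pow, ← pow_mul]
      _ ≤ _ := by gcongr
  exact htV.not_gt (finrank_lt_of_density_increment ht h0 hmeet hsum hdens hgrow)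

lemma exists_finrank_eq_two_of_add [Module.Finite (ZMod 2) V] {P : V → Prop} {a b : V}
    (ha : a ≠ 0) (hb : b ≠ 0) (hab : a + b ≠ 0) (hPa : P a) (hPb : P b) (hPab : P (a + b)) :
    ∃ W : Submodule (ZMod 2) V,
      Module.finrank (ZMod 2) W = 2 ∧ ∀ v ∈ W, v ≠ 0 → P v := by
  have hba : b ∉ Submodule.span (ZMod 2) {a} := fun h => by
    rcases eq_zero_or_eq_of_mem_span_singleton h with h | rfl
    · exact hb h
    · exact hab (ZModModule.add_self b)
  refine ⟨Submodule.span (ZMod 2) {a} ⊔ Submodule.span (ZMod 2) {b}, ?_, fun v hv hv0 => ?_⟩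
  · rw [Submodule.finrank_sup_span_singleton hba, finrank_span_singleton ha]
  · obtain ⟨u, hu, w, hw, rfl⟩ := Submodule.mem_sup.1 hv
    rcases eq_zero_or_eq_of_mem_span_singleton hu with rfl | rfl <;>
      rcases eq_zero_or_eq_of_mem_span_singleton hw with rfl | rfl
    · exact absurd (add_zero 0) hv0
    · rwa [zero_add]
    · rwa [add_zero]
    · exact hPab

end Ramsey

end SubspaceRamsey

theorem stmt1_general {V : Type*} [AddCommGroup V] [Module (ZMod 2) V] [Finite V] (t : ℕ)
    (hV : 10 ^ 11 * t ^ 7 ≤ Module.finrank (ZMod 2) V) (c : V → Bool) :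
    ∃ W : Submodule (ZMod 2) V,
      (Module.finrank (ZMod 2) W = 2 ∧ ∀ v ∈ W, v ≠ 0 → c v = true) ∨
      (Module.finrank (ZMod 2) W = t ∧ ∀ v ∈ W, v ≠ 0 → c v = false) := by
  rcases t.eq_zero_or_pos with rfl | ht
  · exact ⟨⊥, Or.inr ⟨finrank_bot .., fun v hv hv0 => absurd ((Submodule.mem_bot _).1 hv) hv0⟩⟩
  classical
  have := Fintype.ofFinite V
  set R : Finset V := {v | v ≠ 0 ∧ c v = true} with hR
  by_cases hsum : ∀ a ∈ R, ∀ b ∈ R, a + b ∉ R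
  · obtain ⟨U, hU, hblue⟩ :=
      SubspaceRamsey.exists_finrank_eq_disjoint_of_sum_free ht hV (by simp [hR]) hsum
    exact ⟨U, Or.inr ⟨hU, fun v hv hv0 => by simpa [hR, hv0] using hblue v hv⟩⟩
  · push Not at hsum
    simp only [hR, Finset.mem_filter_univ] at hsum
    obtain ⟨a, ⟨ha, hca⟩, b, ⟨hb, hcb⟩, hab, hcab⟩ := hsum
    obtain ⟨W, hW⟩ :=
      SubspaceRamsey.exists_finrank_eq_two_of_add (P := (c · = true)) ha hb hab hca hcb hcab
    exact ⟨W, Or.inl hW⟩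

/-- There is a constant `C > 0` such that whenever `n ≥ C t⁷` and the nonzero vectors
of `𝔽₂ⁿ` are coloured Red (`true`) and Blue (`false`), there is either a 2-dimensional
subspace all of whose nonzero vectors are Red, or a `t`-dimensional subspace all of
whose nonzero vectors are Blue. -/
theorem stmt1 :
    ∃ C : ℝ, 0 < C ∧ ∀ (t n : ℕ), C * (t : ℝ) ^ 7 ≤ (n : ℝ) →
      ∀ c : (Fin n → ZMod 2) → Bool,
        ∃ W : Submodule (ZMod 2) (Fin n → ZMod 2),
          (Module.finrank (ZMod 2) W = 2 ∧ ∀ v ∈ W, v ≠ 0 → c v = true) ∨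
          (Module.finrank (ZMod 2) W = t ∧ ∀ v ∈ W, v ≠ 0 → c v = false) :=
  ⟨10 ^ 11, by norm_num, fun t n hn c =>
    stmt1_general t (by rw [Module.finrank_fin_fun]; exact_mod_cast hn) c⟩
end

section
/- Let n ≥ 2 and let c : 𝔽₂ⁿ ∖ {0} → {1, 2, 3} be a colouring with no rainbow triangle, i.e., there are no distinct nonzero vectors x, y ∈ 𝔽₂ⁿ such that c(x), c(y) and c(x + y) are pairwise distinct. Then there is a linear subspace W of 𝔽₂ⁿ with dim W ≥ n/3 such that at most two colours appear among the vectors of W ∖ {0}. -/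
/-!
The key fact is a linear form of Gallai's theorem on rainbow-free colourings: if `S ≠ 0` and three
or more colours are available, then the vectors of some colour `i` fail to span `S`. By induction a
hyperplane `H` of `S` has a colour `i` spanning only `U < H`. If three colours all spanned `S`,
there would be `b, w ∈ S ∖ H` of two different colours other than `i`, and we may assume that
`b + w` has the colour of `b`. Then the pairs `{y, y + w}` disjoint from `U` with both entries of
the colour of `b`, one of which is `{b + w, b}`, are permuted by translation by vectors of colour
`i`, hence by all of `S`; but the translate `{0, w}` is not such a pair.

Given a colour `i` with span `U`, where `0 < U < S`, the colour of a vector of `S ∖ U` depends only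
on its class modulo `U`. So if `K` is a complement of `U` in `S`, then subspaces of `U` and of `K`
coloured from the same pair of colours have a sum coloured from that pair. By induction, starting
from the subspaces on which at most two colours appear, `S` has subspaces, one for each pair of
colours, whose dimensions add up to at least `dim S`.
-/

open Finset Module

theorem ne_zero_of_notMem {σ M : Type*} [Zero M] [SetLike σ M] [ZeroMemClass σ M] {s : σ} {x : M}
    (hx : x ∉ s) : x ≠ 0 :=
  (ne_of_mem_of_not_mem (zero_mem s) hx).symm

theorem finrank_sup_of_disjoint {K E : Type*} [DivisionRing K] [AddCommGroup E] [Module K E]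
    [FiniteDimensional K E] {U S : Submodule K E} (hUS : Disjoint U S) :
    finrank K (U ⊔ S : Submodule K E) = finrank K U + finrank K S := by
  rw [← Submodule.finrank_sup_add_finrank_inf_eq U S, hUS.eq_bot, finrank_bot, add_zero]

theorem add_mem_of_mem_span_of_forall_add_mem {n : ℕ} [NeZero n] {M : Type*} [AddCommGroup M]
    [Module (ZMod n) M] {s Z : Set M} {u x : M} (hZ : ∀ x ∈ Z, ∀ a ∈ s, x + a ∈ Z)
    (hu : u ∈ Submodule.span (ZMod n) s) (hx : x ∈ Z) : x + u ∈ Z := by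
  induction hu using Submodule.span_induction generalizing x with
  | mem a ha => exact hZ x hx a ha
  | zero => rwa [add_zero]
  | add a b _ _ iha ihb => simpa only [add_assoc] using ihb (iha hx)
  | smul r a _ ih =>
    obtain ⟨m, rfl⟩ := ZMod.natCast_zmod_surjective r
    rw [Nat.cast_smul_eq_nsmul]
    induction m with
    | zero => rwa [zero_nsmul, add_zero]
    | succ m ihm => simpa only [succ_nsmul, add_assoc] using ih ihm

variable {V κ : Type*} [AddCommGroup V] {c : V → κ} {a b u w x y : V}

/-- A colouring of the vectors of an `𝔽₂`-space has no rainbow triangle `{x, y, x + y}`. The colour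
of `0` is irrelevant, and the case `x = y` needs no exclusion since then `c x = c y`. -/
def RainbowFree (c : V → κ) : Prop :=
  ∀ x y, x ≠ 0 → y ≠ 0 → c x = c y ∨ c x = c (x + y) ∨ c y = c (x + y)

theorem RainbowFree.color_add (h : RainbowFree c) (hx : x ≠ 0) (hy : y ≠ 0) (hxy : c x ≠ c y) :
    c (x + y) = c x ∨ c (x + y) = c y := by
  rcases h x y hx hy with hc | hc | hc
  · exact absurd hc hxy
  · exact .inl hc.symm
  · exact .inr hc.symm

variable [Module (ZMod 2) V] {i j k : κ} {t : Finset κ} {H S : Submodule (ZMod 2) V}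

theorem add_add_self_cancel (x w : V) : x + w + w = x := by
  rw [add_assoc, ZModModule.add_self, add_zero]

theorem add_mem_of_covBy (hHS : H ⋖ S) (hxS : x ∈ S) (hxH : x ∉ H) (hyS : y ∈ S) (hyH : y ∉ H) :
    x + y ∈ H := by
  have hsup : H ⊔ Submodule.span (ZMod 2) {x} = S :=
    (hHS.eq_or_eq le_sup_left (sup_le hHS.le (by simpa using hxS))).resolve_left
      (by simpa using hxH)
  obtain ⟨h, hh, z, hz, rfl⟩ := Submodule.mem_sup.1 (hsup.ge hyS)
  obtain ⟨r, rfl⟩ := Submodule.mem_span_singleton.1 hz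
  obtain rfl | rfl : r = 0 ∨ r = 1 := (by decide : ∀ r : ZMod 2, r = 0 ∨ r = 1) r
  · simp [hh] at hyH
  · rwa [one_smul, add_left_comm, ZModModule.add_self, add_zero]

/-- The span of the nonzero vectors of `S` of colour `i`. In a rainbow-free colouring, translation
by its elements preserves the colours of the vectors of `S` outside it. -/
def colorSpan (c : V → κ) (S : Submodule (ZMod 2) V) (i : κ) : Submodule (ZMod 2) V :=
  Submodule.span (ZMod 2) {x | x ∈ S ∧ x ≠ 0 ∧ c x = i}

/-- All nonzero vectors of `W` have their colour in `p`. With `p` of size two, this says that at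
most two colours appear on `W`. -/
def ColoredIn (c : V → κ) (W : Submodule (ZMod 2) V) (p : Finset κ) : Prop :=
  ∀ v ∈ W, v ≠ 0 → c v ∈ p

theorem colorSpan_le : colorSpan c S i ≤ S :=
  Submodule.span_le.2 fun _ hx => hx.1

theorem mem_colorSpan (hxS : x ∈ S) (hx0 : x ≠ 0) (hxi : c x = i) : x ∈ colorSpan c S i :=
  Submodule.subset_span ⟨hxS, hx0, hxi⟩

theorem color_ne_of_notMem_colorSpan (hxS : x ∈ S) (hx : x ∉ colorSpan c S i) : c x ≠ i :=
  fun hxi => hx (mem_colorSpan hxS (ne_zero_of_notMem hx) hxi)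

theorem exists_notMem_of_colorSpan_eq (hHS : H ⋖ S) (hS : colorSpan c S i = S) :
    ∃ x ∈ S, x ∉ H ∧ c x = i := by
  by_contra! hx
  refine hHS.lt.not_ge (hS.ge.trans (Submodule.span_le.2 fun x ⟨hxS, _, hxi⟩ => ?_))
  by_contra hxH
  exact hx x hxS hxH hxi

namespace RainbowFree

theorem color_add_of_mem_colorSpan (h : RainbowFree c) (hu : u ∈ colorSpan c S i) (hxS : x ∈ S)
    (hx : x ∉ colorSpan c S i) : c (x + u) = c x := by
  refine (add_mem_of_mem_span_of_forall_add_mem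
    (Z := {y | (y ∈ S ∧ y ∉ colorSpan c S i) ∧ c y = c x}) ?_ hu ⟨⟨hxS, hx⟩, rfl⟩).2
  rintro y ⟨⟨hyS, hy⟩, hyx⟩ a ⟨haS, ha0, hai⟩
  have hya : y + a ∉ colorSpan c S i := by
    rwa [Submodule.add_mem_iff_left _ (mem_colorSpan haS ha0 hai)]
  have hyi : c y ≠ c a := hai ▸ color_ne_of_notMem_colorSpan hyS hy
  have hyai : c (y + a) ≠ c a :=
    hai ▸ color_ne_of_notMem_colorSpan (S.add_mem hyS haS) hya
  exact ⟨⟨S.add_mem hyS haS, hya⟩,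
    ((h.color_add (ne_zero_of_notMem hy) ha0 hyi).resolve_right hyai).trans hyx⟩

end RainbowFree

/-- The vectors `y` of `H` outside the span of colour `i` in `H` for which both entries of the pair
`{y, y + w}` have colour `j`. If `w ∉ H` has a third colour, the set is stable, up to exchanging the
two entries, under adding vectors of colour `i`; unless it is empty, this prevents those vectors
from spanning a subspace that has `H` as a hyperplane. -/
def pairSet (c : V → κ) (H : Submodule (ZMod 2) V) (i j : κ) (w : V) : Set V :=
  {y | (y ∈ H ∧ y ∉ colorSpan c H i) ∧ c y = j ∧ c (y + w) = j}

namespace RainbowFree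

theorem color_add_of_color_ne (h : RainbowFree c) (hHS : H ⋖ S) (haS : a ∈ S) (haH : a ∉ H)
    (hbS : b ∈ S) (hbH : b ∉ H) (hb : c b ≠ c a) (hab : a + b ∉ colorSpan c H (c a)) :
    c (a + b) = c b :=
  (h.color_add (ne_zero_of_notMem haH) (ne_zero_of_notMem hbH) hb.symm).resolve_left
    (color_ne_of_notMem_colorSpan (add_mem_of_covBy hHS haS haH hbS hbH) hab)

theorem mem_pairSet (h : RainbowFree c) (hwH : w ∉ H) (hwi : c w ≠ i) (hwj : c w ≠ j)
    (hyH : y ∈ H) (hy : y ∉ colorSpan c H i) (hcy : c y = i ∨ c y = j)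
    (hcyw : c (y + w) = i ∨ c (y + w) = j) : y ∈ pairSet c H i j w := by
  have hyj : c y = j := hcy.resolve_left (color_ne_of_notMem_colorSpan hyH hy)
  refine ⟨⟨hyH, hy⟩, hyj, ?_⟩
  have := h.color_add (ne_zero_of_notMem hy) (ne_zero_of_notMem hwH) (hyj ▸ hwj.symm)
  grind

theorem add_mem_pairSet (h : RainbowFree c) (hHS : H ⋖ S) (hwS : w ∈ S) (hwH : w ∉ H)
    (hwi : c w ≠ i) (hwj : c w ≠ j) (hji : j ≠ i) (hy : y ∈ pairSet c H i j w)
    (haS : a ∈ S) (ha0 : a ≠ 0) (hai : c a = i) :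
    y + a ∈ pairSet c H i j w ∨ y + a + w ∈ pairSet c H i j w := by
  obtain ⟨⟨hyH, hyU⟩, hyj, hywj⟩ := hy
  have hywH : y + w ∉ H := by rwa [H.add_mem_iff_right hyH]
  have hcya : c (y + a) = i ∨ c (y + a) = j := by
    simpa only [hyj, hai, or_comm] using
      h.color_add (ne_zero_of_notMem hyU) ha0 (by rwa [hyj, hai])
  have hcyaw : c (y + a + w) = i ∨ c (y + a + w) = j := by
    simpa only [hywj, hai, or_comm, add_right_comm] using
      h.color_add (ne_zero_of_notMem hywH) ha0 (by rwa [hywj, hai])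
  by_cases haH : a ∈ H
  · left
    have haU : a ∈ colorSpan c H i := mem_colorSpan haH ha0 hai
    refine h.mem_pairSet hwH hwi hwj (H.add_mem hyH haH) ?_ hcya hcyaw
    rwa [Submodule.add_mem_iff_left _ haU]
  · right
    have hawH : a + w ∈ H := add_mem_of_covBy hHS haS haH hwS hwH
    have hyawU : y + a + w ∉ colorSpan c H i := fun hU => by
      have heq : y + (y + a + w) = a + w := by
        rw [add_assoc, ← add_assoc y, ZModModule.add_self, zero_add]
      have hawU : a + w ∉ colorSpan c H i := by
        rwa [← heq, Submodule.add_mem_iff_left _ hU]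
      have hawj : c (a + w) = j := by
        rw [← heq, h.color_add_of_mem_colorSpan hU hyH hyU, hyj]
      subst hai
      exact hwj ((h.color_add_of_color_ne hHS haS haH hwS hwH hwi hawU).symm.trans hawj)
    refine h.mem_pairSet hwH hwi hwj (by simpa only [add_assoc] using H.add_mem hyH hawH) hyawU
      hcyaw ?_
    rwa [add_add_self_cancel]

theorem colorSpan_ne_of_mem_pairSet (h : RainbowFree c) (hHS : H ⋖ S) (hwS : w ∈ S) (hwH : w ∉ H)
    (hwi : c w ≠ i) (hwj : c w ≠ j) (hji : j ≠ i) (hy : y ∈ pairSet c H i j w) :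
    colorSpan c S i ≠ S := by
  intro hspan
  have hyS : y ∈ colorSpan c S i := hspan.symm ▸ hHS.le hy.1.1
  have hyy := add_mem_of_mem_span_of_forall_add_mem
    (Z := {x | x ∈ pairSet c H i j w ∨ x + w ∈ pairSet c H i j w}) ?_ hyS (.inl hy)
  · rw [ZModModule.add_self, Set.mem_ofPred_eq, zero_add] at hyy
    rcases hyy with h0 | hw
    · exact h0.1.2 (Submodule.zero_mem _)
    · exact hwH hw.1.1
  · rintro x (hx | hx) a ⟨haS, ha0, hai⟩
    · exact h.add_mem_pairSet hHS hwS hwH hwi hwj hji hx haS ha0 hai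
    · have := h.add_mem_pairSet hHS hwS hwH hwi hwj hji hx haS ha0 hai
      rw [add_right_comm x w a, add_add_self_cancel] at this
      exact this.symm

theorem add_notMem_colorSpan (h : RainbowFree c) (hHS : H ⋖ S) (hH : colorSpan c H i ≠ H)
    (hS : colorSpan c S i = S) (hbS : b ∈ S) (hbH : b ∉ H) (hwS : w ∈ S) (hwH : w ∉ H)
    (hbi : c b ≠ i) (hwi : c w ≠ i) (hbw : c b ≠ c w) : b + w ∉ colorSpan c H i := by
  intro hbwU
  have hab : ∀ a ∈ S, a ∉ H → c a = i → a + b ∈ colorSpan c H i := by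
    rintro a haS haH rfl
    by_contra habU
    have heq : a + b + (b + w) = a + w := ZModModule.add_add_add_cancel a b w
    have hawU : a + w ∉ colorSpan c H (c a) := by
      rwa [← heq, Submodule.add_mem_iff_left _ hbwU]
    have hconst := h.color_add_of_mem_colorSpan hbwU (add_mem_of_covBy hHS haS haH hbS hbH) habU
    rw [heq, h.color_add_of_color_ne hHS haS haH hwS hwH hwi hawU,
      h.color_add_of_color_ne hHS haS haH hbS hbH hbi habU] at hconst
    exact hbw hconst.symm
  have hle : S ≤ colorSpan c H i ⊔ Submodule.span (ZMod 2) {b} := by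
    rw [← hS]
    refine Submodule.span_le.2 fun a ⟨haS, ha0, hai⟩ => ?_
    by_cases haH : a ∈ H
    · exact Submodule.mem_sup_left (mem_colorSpan haH ha0 hai)
    · exact Submodule.mem_sup.2 ⟨a + b, hab a haS haH hai, b, Submodule.mem_span_singleton_self b,
        add_add_self_cancel a b⟩
  have hdisj : Submodule.span (ZMod 2) {b} ⊓ H = ⊥ :=
    (Submodule.disjoint_span_singleton_of_notMem hbH).symm.eq_bot
  refine hH ?_
  calc
    colorSpan c H i = (colorSpan c H i ⊔ Submodule.span (ZMod 2) {b}) ⊓ H := by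
      rw [sup_inf_assoc_of_le _ colorSpan_le, hdisj, sup_bot_eq]
    _ = H := inf_eq_right.2 (hHS.le.trans hle)

theorem exists_colorSpan_ne_of_covBy (h : RainbowFree c) (hHS : H ⋖ S)
    (hH : colorSpan c H i ≠ H) (hji : j ≠ i) (hki : k ≠ i) (hjk : j ≠ k) :
    colorSpan c S i ≠ S ∨ colorSpan c S j ≠ S ∨ colorSpan c S k ≠ S := by
  by_contra! hS
  obtain ⟨b, hbS, hbH, rfl⟩ := exists_notMem_of_colorSpan_eq hHS hS.2.1
  obtain ⟨w, hwS, hwH, rfl⟩ := exists_notMem_of_colorSpan_eq hHS hS.2.2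
  have hbwH : b + w ∈ H := add_mem_of_covBy hHS hbS hbH hwS hwH
  have hbwU : b + w ∉ colorSpan c H i :=
    h.add_notMem_colorSpan hHS hH hS.1 hbS hbH hwS hwH hji hki hjk
  rcases h.color_add (ne_zero_of_notMem hbH) (ne_zero_of_notMem hwH) hjk with hbw | hbw
  · have hmem : b + w ∈ pairSet c H i (c b) w :=
      ⟨⟨hbwH, hbwU⟩, hbw, by rw [add_add_self_cancel]⟩
    exact h.colorSpan_ne_of_mem_pairSet hHS hwS hwH hki hjk.symm hji hmem hS.1
  · have hmem : b + w ∈ pairSet c H i (c w) b :=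
      ⟨⟨hbwH, hbwU⟩, hbw, by rw [add_comm b, add_add_self_cancel]⟩
    exact h.colorSpan_ne_of_mem_pairSet hHS hbS hbH hji hjk hki hmem hS.1

theorem exists_colorSpan_ne [FiniteDimensional (ZMod 2) V] (h : RainbowFree c) (ht : 2 < #t)
    (hS : S ≠ ⊥) : ∃ i ∈ t, colorSpan c S i ≠ S := by
  classical
  induction S using WellFoundedLT.induction with
  | ind S ih =>
  obtain ⟨H, -, hHS⟩ := exists_le_covBy_of_lt (bot_lt_iff_ne_bot.2 hS)
  rcases eq_or_ne H ⊥ with rfl | hH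
  · obtain ⟨v, hvS, hv0⟩ := S.ne_bot_iff.1 hS
    obtain ⟨i, hit, hiv⟩ := exists_mem_ne (one_lt_two.trans ht) (c v)
    refine ⟨i, hit, fun hspan => ?_⟩
    obtain ⟨x, hxS, hx0, rfl⟩ := exists_notMem_of_colorSpan_eq hHS hspan
    have hxv : x + v = 0 := by simpa using add_mem_of_covBy hHS hxS hx0 hvS (by simpa using hv0)
    rw [← ZModModule.sub_eq_add, sub_eq_zero] at hxv
    exact hiv (congrArg c hxv)
  · obtain ⟨i, hit, hi⟩ := ih H hHS.lt hH
    obtain ⟨j, hj, k, hk, hjk⟩ : ∃ j ∈ t.erase i, ∃ k ∈ t.erase i, j ≠ k := by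
      rw [← one_lt_card, card_erase_of_mem hit]
      lia
    rw [mem_erase] at hj hk
    rcases h.exists_colorSpan_ne_of_covBy hHS hi hj.1 hk.1 hjk with hne | hne | hne
    · exact ⟨i, hit, hne⟩
    · exact ⟨j, hj.2, hne⟩
    · exact ⟨k, hk.2, hne⟩

theorem coloredIn_sup (h : RainbowFree c) {A K B : Submodule (ZMod 2) V}
    (hAU : A ≤ colorSpan c S i) (hBK : B ≤ K) (hKS : K ≤ S) (hK : Disjoint (colorSpan c S i) K)
    (hA : ColoredIn c A t) (hB : ColoredIn c B t) : ColoredIn c (A ⊔ B) t := by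
  intro v hv hv0
  obtain ⟨a, ha, b, hb, rfl⟩ := Submodule.mem_sup.1 hv
  rcases eq_or_ne b 0 with rfl | hb0
  · rw [add_zero] at hv0 ⊢
    exact hA a ha hv0
  · have hbU : b ∉ colorSpan c S i := fun hbU =>
      hb0 (Submodule.disjoint_def.1 hK b hbU (hBK hb))
    rw [add_comm, h.color_add_of_mem_colorSpan (hAU ha) (hKS (hBK hb)) hbU]
    exact hB b hb hb0

end RainbowFree

theorem exists_coloredIn_or_lt_card [Fintype κ] {m : ℕ} (hm : m ≤ Fintype.card κ) :
    (∃ p : Finset κ, #p = m ∧ ColoredIn c S p) ∨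
      ∃ t : Finset κ, m < #t ∧ ∀ i ∈ t, ∃ v ∈ S, v ≠ 0 ∧ c v = i := by
  classical
  set t : Finset κ := {i | ∃ v ∈ S, v ≠ 0 ∧ c v = i} with ht
  rcases le_or_gt #t m with hle | hlt
  · obtain ⟨p, htp, -, hp⟩ := exists_subsuperset_card_eq t.subset_univ hle hm
    exact .inl ⟨p, hp, fun v hv hv0 => htp (by simpa [ht] using ⟨v, hv, hv0, rfl⟩)⟩
  · exact .inr ⟨t, hlt, by simp [ht]⟩

theorem exists_coloredIn_family_of_coloredIn {p : Finset κ} {P : Finset (Finset κ)}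
    (hSp : ColoredIn c S p) (hp : p ∈ P) :
    ∃ W : Finset κ → Submodule (ZMod 2) V, (∀ q, W q ≤ S) ∧ (∀ q, ColoredIn c (W q) q) ∧
      finrank (ZMod 2) S ≤ ∑ q ∈ P, finrank (ZMod 2) (W q) := by
  classical
  obtain ⟨W, hWp, hW⟩ : ∃ W : Finset κ → Submodule (ZMod 2) V, W p = S ∧ ∀ q ≠ p, W q = ⊥ :=
    ⟨Function.update (fun _ => ⊥) p S, Function.update_self .., fun _ hq =>
      Function.update_of_ne hq ..⟩
  refine ⟨W, fun q => ?_, fun q => ?_, ?_⟩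
  · rcases eq_or_ne q p with rfl | hqp
    · exact hWp.le
    · exact hW q hqp ▸ bot_le
  · rcases eq_or_ne q p with rfl | hqp
    · exact hWp.symm ▸ hSp
    · rw [hW q hqp]
      exact fun v hv hv0 => absurd ((Submodule.mem_bot _).1 hv) hv0
  · exact hWp ▸ single_le_sum (f := fun q => finrank (ZMod 2) (W q)) (fun _ _ => Nat.zero_le _) hp

theorem RainbowFree.exists_coloredIn_family [FiniteDimensional (ZMod 2) V] [Fintype κ]
    (h : RainbowFree c) (hκ : 2 ≤ Fintype.card κ) (S : Submodule (ZMod 2) V) :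
    ∃ W : Finset κ → Submodule (ZMod 2) V, (∀ p, W p ≤ S) ∧ (∀ p, ColoredIn c (W p) p) ∧
      finrank (ZMod 2) S ≤ ∑ p ∈ powersetCard 2 univ, finrank (ZMod 2) (W p) := by
  classical
  induction S using WellFoundedLT.induction with
  | ind S ih =>
  rcases exists_coloredIn_or_lt_card (c := c) (S := S) hκ with ⟨p, hp, hSp⟩ | ⟨t, ht, htS⟩
  · exact exists_coloredIn_family_of_coloredIn hSp (mem_powersetCard.2 ⟨p.subset_univ, hp⟩)
  · have hS : S ≠ ⊥ := by
      obtain ⟨i, hi⟩ := card_pos.1 (zero_lt_two.trans ht)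
      exact S.ne_bot_iff.2 ((htS i hi).imp fun v hv => ⟨hv.1, hv.2.1⟩)
    obtain ⟨i, hit, hi⟩ := h.exists_colorSpan_ne ht hS
    obtain ⟨v, hvS, hv0, hvi⟩ := htS i hit
    obtain ⟨K, hdisj, hsup⟩ :=
      IsModularLattice.exists_disjoint_and_sup_eq (colorSpan_le : colorSpan c S i ≤ S)
    have hKS : K ≤ S := hsup ▸ le_sup_right
    have hK : K ≠ S := by
      rintro rfl
      exact hv0 (Submodule.disjoint_def.1 hdisj v (mem_colorSpan hvS hv0 hvi) hvS)
    obtain ⟨A, hAU, hA, hsumA⟩ := ih _ (colorSpan_le.lt_of_ne hi)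
    obtain ⟨B, hBK, hB, hsumB⟩ := ih K (hKS.lt_of_ne hK)
    refine ⟨fun p => A p ⊔ B p, fun p => sup_le ((hAU p).trans colorSpan_le) ((hBK p).trans hKS),
      fun p => h.coloredIn_sup (hAU p) (hBK p) hKS hdisj (hA p) (hB p), ?_⟩
    calc
      finrank (ZMod 2) S = finrank (ZMod 2) (colorSpan c S i) + finrank (ZMod 2) K := by
        rw [← finrank_sup_of_disjoint hdisj, hsup]
      _ ≤ ∑ p ∈ powersetCard 2 univ, (finrank (ZMod 2) (A p) + finrank (ZMod 2) (B p)) := by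
        rw [sum_add_distrib]
        exact add_le_add hsumA hsumB
      _ = ∑ p ∈ powersetCard 2 univ, finrank (ZMod 2) (A p ⊔ B p : Submodule (ZMod 2) V) :=
        sum_congr rfl fun p _ => (finrank_sup_of_disjoint (hdisj.mono (hAU p) (hBK p))).symm

theorem stmt3_general [FiniteDimensional (ZMod 2) V] [Fintype κ] (hκ : 2 ≤ Fintype.card κ)
    (h : RainbowFree c) :
    ∃ W : Submodule (ZMod 2) V,
      (finrank (ZMod 2) V : ℝ) / (Fintype.card κ).choose 2 ≤ finrank (ZMod 2) W ∧
      ∃ p : Finset κ, #p = 2 ∧ ColoredIn c W p := by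
  obtain ⟨W, -, hW, hsum⟩ := h.exists_coloredIn_family hκ ⊤
  have hchoose : 0 < (Fintype.card κ).choose 2 := Nat.choose_pos hκ
  have hcard : #(powersetCard 2 (univ : Finset κ)) = (Fintype.card κ).choose 2 := by
    rw [card_powersetCard, card_univ]
  obtain ⟨p, hp, hle⟩ : ∃ p ∈ powersetCard 2 (univ : Finset κ),
      (finrank (ZMod 2) V : ℝ) / (Fintype.card κ).choose 2 ≤ finrank (ZMod 2) (W p) := by
    refine exists_le_of_sum_le (card_pos.1 (hcard ▸ hchoose)) ?_
    rw [sum_const, hcard, nsmul_eq_mul, mul_div_cancel₀ _ (by positivity)]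
    exact_mod_cast finrank_top (ZMod 2) V ▸ hsum
  exact ⟨W p, hle, p, (mem_powersetCard.1 hp).2, hW p⟩

/-- If `n ≥ 2` and `c` is a 3-colouring of the nonzero vectors of `𝔽₂ⁿ` with no
rainbow triangle, then there is a subspace `W` with `dim W ≥ n / 3` on whose nonzero
vectors at most two colours appear (i.e. some colour is avoided). -/
theorem stmt3 (n : ℕ) (hn : 2 ≤ n) (c : (Fin n → ZMod 2) → Fin 3)
    (hrainbowfree : ¬ ∃ x y : Fin n → ZMod 2, x ≠ 0 ∧ y ≠ 0 ∧ x ≠ y ∧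
      c x ≠ c y ∧ c x ≠ c (x + y) ∧ c y ≠ c (x + y)) :
    ∃ W : Submodule (ZMod 2) (Fin n → ZMod 2),
      (n : ℝ) / 3 ≤ (Module.finrank (ZMod 2) W : ℝ) ∧
      ∃ i : Fin 3, ∀ v ∈ W, v ≠ 0 → c v ≠ i := by
  obtain ⟨W, hdim, p, hp, hWp⟩ := stmt3_general (c := c) (by decide) (by
    intro x y hx hy
    by_contra! hc
    exact hrainbowfree ⟨x, y, hx, hy, mt (congrArg c) hc.1, hc⟩)
  obtain ⟨i, -, hip⟩ := exists_mem_notMem_of_card_lt_card (s := p) (t := univ) (by simp [hp])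
  exact ⟨W, by simpa [Nat.choose] using hdim, i, fun v hv hv0 hvi => hip (hvi ▸ hWp v hv hv0)⟩
end

section
/- Let n ∈ ℕ, let q be a prime power with field 𝔽_q, and let c be a colouring of the points of 𝔽_qⁿ such that for every two-dimensional linear subspace L of 𝔽_qⁿ, at most two colours appear among the points contained in L. Then there exist linear subspaces {0} = W₀ ⊆ W₁ ⊆ … ⊆ W_k = 𝔽_qⁿ such that for each 0 ≤ i < k, at most two colours appear among the points contained in W_{i+1} but not in W_i. -/
/-- A point of `𝔽_qⁿ`: a one-dimensional linear subspace. -/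
def ProjPoint (K : Type) [Field K] (n : ℕ) : Type :=
  {P : Submodule K (Fin n → K) // Module.finrank K P = 1}

/-! Extend the colouring to vectors, giving `0` a colour of its own, and write `a ≺ b` when the
colours of `a` and `b` differ and every `b + t a` has the colour of `b`. If `a`, `b`, `c` have three
different colours, put `P = {t ≠ 0 | a + t b has the colour of a}`, and define `Q` from `(b, c)`
and `R` from `(c, a)` in the same way. For `t s u = 1` the point `a + t b + t s c` lies on the lines
joining `a + t b`, `b + s c` and `c + u a` to the opposite vertices, so `(t, s, u)` lies neither in
`P × Q × R` nor in `Pᶜ × Qᶜ × Rᶜ`. In a finite group this forces one of `P`, `Q`, `R` to be empty,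
that is, `a ≺ b`, `b ≺ c` or `c ≺ a`.

Hence `≺` behaves like a weak order across colours, and some vector `v` lies above all vectors of
all but at most one of the other colours. Translating a suitable vector by vectors of the remaining
colours never produces `0`, so these span a proper subspace, outside of which only two colours
occur. Iterating this in smaller and smaller subspaces gives the chain. -/

theorem card_mul_card_le_of_forall_mul_mul_eq_one {G : Type*} [Group G] [Fintype G] [DecidableEq G]
    {P Q R : Finset G} (h : ∀ t s u : G, t * s * u = 1 →
      ¬ (t ∈ P ∧ s ∈ Q ∧ u ∈ R) ∧ ¬ (t ∉ P ∧ s ∉ Q ∧ u ∉ R)) :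
    Fintype.card G * Fintype.card G ≤ P.card * Rᶜ.card + Q.card * Pᶜ.card + R.card * Qᶜ.card := by
  -- A cyclic 0-1 word of length three that is not constant has a descent, and two of the three
  -- letters determine the solution of `t * s * u = 1`.
  have hcover : (Finset.univ : Finset (G × G)) ⊆
      (P ×ˢ Rᶜ).image (fun x ↦ (x.1, x.1⁻¹ * x.2⁻¹)) ∪ (Q ×ˢ Pᶜ).image Prod.swap ∪
        (R ×ˢ Qᶜ).image (fun x ↦ (x.1⁻¹ * x.2⁻¹, x.2)) := by
    rintro ⟨t, s⟩ -
    have := h t s (t * s)⁻¹ (mul_inv_cancel _)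
    have hs : (t, s) = (t, t⁻¹ * (t * s)⁻¹⁻¹) := by group
    have ht : (t, s) = ((t * s)⁻¹⁻¹ * s⁻¹, s) := by group
    simp only [Finset.mem_union, Finset.mem_image, Finset.mem_product, Finset.mem_compl]
    by_cases t ∈ P <;> by_cases s ∈ Q <;> by_cases (t * s)⁻¹ ∈ R
    all_goals first
      | exact Or.inl (Or.inl ⟨(t, (t * s)⁻¹), ⟨by tauto, by tauto⟩, hs.symm⟩)
      | exact Or.inl (Or.inr ⟨(s, t), ⟨by tauto, by tauto⟩, rfl⟩)
      | exact Or.inr ⟨((t * s)⁻¹, s), ⟨by tauto, by tauto⟩, ht.symm⟩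
  calc Fintype.card G * Fintype.card G = (Finset.univ : Finset (G × G)).card := by
        rw [Finset.card_univ, Fintype.card_prod]
    _ ≤ _ := Finset.card_le_card hcover
    _ ≤ (P ×ˢ Rᶜ).card + (Q ×ˢ Pᶜ).card + (R ×ˢ Qᶜ).card := by
        refine (Finset.card_union_le _ _).trans (add_le_add ?_ Finset.card_image_le)
        exact (Finset.card_union_le _ _).trans
          (add_le_add Finset.card_image_le Finset.card_image_le)
    _ = _ := by simp only [Finset.card_product]

theorem exists_mul_mul_eq_one_and_mem_or_notMem {G : Type*} [Group G] [Finite G] {P Q R : Set G}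
    (hP : P.Nonempty) (hQ : Q.Nonempty) (hR : R.Nonempty) :
    ∃ t s u : G, t * s * u = 1 ∧
      ((t ∈ P ∧ s ∈ Q ∧ u ∈ R) ∨ (t ∉ P ∧ s ∉ Q ∧ u ∉ R)) := by
  classical
  have := Fintype.ofFinite G
  lift P to Finset G using P.toFinite
  lift Q to Finset G using Q.toFinite
  lift R to Finset G using R.toFinite
  simp only [Finset.coe_nonempty, ← Finset.card_pos] at hP hQ hR
  simp only [Finset.mem_coe]
  by_contra h
  push Not at h
  have hcard : Fintype.card G * Fintype.card G ≤
      P.card * Rᶜ.card + Q.card * Pᶜ.card + R.card * Qᶜ.card :=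
    card_mul_card_le_of_forall_mul_mul_eq_one fun t s u htsu ↦ by
      have := h t s u htsu
      tauto
  have hexpand : (P.card + Pᶜ.card) * (Q.card + Qᶜ.card) * (R.card + Rᶜ.card) =
      P.card * Q.card * R.card + Pᶜ.card * Qᶜ.card * Rᶜ.card +
        ((Q.card + Qᶜ.card) * (P.card * Rᶜ.card) + (R.card + Rᶜ.card) * (Q.card * Pᶜ.card) +
          (P.card + Pᶜ.card) * (R.card * Qᶜ.card)) := by ring
  simp only [Finset.card_add_card_compl] at hexpand
  have hpos : 0 < P.card * Q.card * R.card := by positivity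
  linarith [Nat.mul_le_mul_left (Fintype.card G) hcard,
    Nat.zero_le (Pᶜ.card * Qᶜ.card * Rᶜ.card)]

theorem notMem_span_of_forall_add_smul_mem {K V : Type*} [Ring K] [AddCommGroup V] [Module K V]
    {T X : Set V} (hT : (0 : V) ∉ T) (hadd : ∀ v ∈ T, ∀ x ∈ X, ∀ t : K, v + t • x ∈ T)
    {v : V} (hv : v ∈ T) : v ∉ Submodule.span K X := by
  have translate (u : V) (hu : u ∈ Submodule.span K X) : ∀ w ∈ T, w + u ∈ T := by
    induction hu using Submodule.closure_induction with
    | zero => simp only [add_zero, imp_self, implies_true]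
    | add x y _ _ hx hy => exact fun w hw ↦ add_assoc w x y ▸ hy _ (hx w hw)
    | smul_mem t x hx => exact fun w hw ↦ hadd w hw x hx t
  exact fun hspan ↦ hT (add_neg_cancel v ▸ translate _ (neg_mem hspan) v hv)

theorem exists_seq_of_forall_exists_lt {α : Type*} [PartialOrder α] [OrderBot α] [WellFoundedLT α]
    {r : α → α → Prop} (h : ∀ x ≠ ⊥, ∃ y < x, r y x) (x : α) :
    ∃ (k : ℕ) (w : ℕ → α), w 0 = ⊥ ∧ w k = x ∧ ∀ i < k, w i < w (i + 1) ∧ r (w i) (w (i + 1)) := by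
  induction x using WellFoundedLT.induction with
  | ind x ih =>
    obtain rfl | hx := eq_or_ne x ⊥
    · exact ⟨0, fun _ ↦ ⊥, rfl, rfl, by simp⟩
    obtain ⟨y, hyx, hr⟩ := h x hx
    obtain ⟨k, w, hw0, hwk, hw⟩ := ih y hyx
    refine ⟨k + 1, fun i ↦ if i ≤ k then w i else x, by simp [hw0], by simp, fun i hi ↦ ?_⟩
    obtain hik | rfl := (Nat.lt_succ_iff.1 hi).lt_or_eq
    · simpa [hik.le, Nat.succ_le_of_lt hik] using hw i hik
    · simpa [hwk] using ⟨hyx, hr⟩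

/-- A colouring of the vectors of `V` that is constant on punctured lines through `0` and takes at
most two colours on a line joining two points of different colours. The zero vector is treated as
any other: a colouring of the nonzero vectors is extended by giving `0` a colour of its own. -/
structure RainbowFree_s5 (K : Type*) {V S : Type*} [DivisionRing K] [AddCommGroup V] [Module K V]
    (f : V → S) : Prop where
  apply_units_smul (t : Kˣ) (v : V) : f (t • v) = f v
  apply_add {x y : V} : f x ≠ f y → f (x + y) = f x ∨ f (x + y) = f y

/-- The relation `a ≺ b`: the vectors `a` and `b` have different colours, and translating `b` along
`a` does not change its colour. On the line joining the points `a` and `b`, all points but `a` then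
have the colour of `b`. -/
def Precedes (K : Type*) {V S : Type*} [DivisionRing K] [AddCommGroup V] [Module K V]
    (f : V → S) (a b : V) : Prop :=
  f a ≠ f b ∧ ∀ t : K, f (b + t • a) = f b

/-- The vectors from which `v` can be reached in one or two steps of `Precedes`. The size of this
set serves as a rank of `v`; two steps are allowed because a single one never joins vectors of equal
colour. -/
def lowerTwoStep (K : Type*) {V S : Type*} [DivisionRing K] [AddCommGroup V] [Module K V]
    (f : V → S) (v : V) : Set V :=
  {z | Precedes K f z v ∨ ∃ y, Precedes K f z y ∧ Precedes K f y v}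

section RainbowFree_s5

variable {K V S : Type*} [DivisionRing K] [AddCommGroup V] [Module K V] {f : V → S}

theorem Precedes.asymm {a b : V} (hab : Precedes K f a b) : ¬ Precedes K f b a := by
  intro hba
  have hb : f (b + a) = f b := by simpa only [one_smul] using hab.2 1
  have ha : f (b + a) = f a := by simpa only [one_smul, add_comm a] using hba.2 1
  exact hab.1 (ha.symm.trans hb)

namespace RainbowFree_s5

theorem comp_linearMap (hf : RainbowFree_s5 K f) {W : Type*} [AddCommGroup W] [Module K W]
    (g : W →ₗ[K] V) : RainbowFree_s5 K (f ∘ g) where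
  apply_units_smul t v := by
    simp only [Function.comp_apply, Units.smul_def, map_smul, ← hf.apply_units_smul t (g v)]
  apply_add h := by
    simpa only [Function.comp_apply, map_add] using hf.apply_add h

theorem apply_add_smul (hf : RainbowFree_s5 K f) {x y : V} (hxy : f x ≠ f y) (t : K) :
    f (x + t • y) = f x ∨ f (x + t • y) = f y := by
  obtain rfl | ht := eq_or_ne t 0
  · simp
  · have hty : f (t • y) = f y := hf.apply_units_smul (Units.mk0 t ht) y
    rw [← hty] at hxy ⊢
    exact hf.apply_add hxy

theorem not_precedes_iff (hf : RainbowFree_s5 K f) {a b : V} (hab : f a ≠ f b) :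
    ¬ Precedes K f a b ↔ ∃ t : Kˣ, f (a + t • b) = f a := by
  have hinv (t : Kˣ) : f (b + (↑t⁻¹ : K) • a) = f (a + t • b) := by
    rw [← hf.apply_units_smul t⁻¹ (a + t • b), smul_add, inv_smul_smul, add_comm, Units.smul_def]
  constructor
  · intro h
    simp only [Precedes, not_and, not_forall] at h
    obtain ⟨t, ht⟩ := h hab
    have ht0 : t ≠ 0 := by rintro rfl; simp at ht
    refine ⟨(Units.mk0 t ht0)⁻¹, ?_⟩
    rw [← hinv, inv_inv, Units.val_mk0]
    exact (hf.apply_add_smul hab.symm t).resolve_left ht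
  · rintro ⟨t, ht⟩ h
    exact hab (by rw [← ht, ← hinv, h.2])

theorem precedes_or_precedes_or_precedes [Finite K] (hf : RainbowFree_s5 K f) {a b c : V}
    (hab : f a ≠ f b) (hbc : f b ≠ f c) (hca : f c ≠ f a) :
    Precedes K f a b ∨ Precedes K f b c ∨ Precedes K f c a := by
  by_contra! ⟨hnab, hnbc, hnca⟩
  rw [hf.not_precedes_iff hab] at hnab
  rw [hf.not_precedes_iff hbc] at hnbc
  rw [hf.not_precedes_iff hca] at hnca
  obtain ⟨t, s, u, htsu, h⟩ := exists_mul_mul_eq_one_and_mem_or_notMem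
    (P := {t : Kˣ | f (a + t • b) = f a}) (Q := {s : Kˣ | f (b + s • c) = f b})
    (R := {u : Kˣ | f (c + u • a) = f c}) hnab hnbc hnca
  simp only [Set.mem_ofPred_eq] at h
  have hP := hf.apply_add_smul hab t
  have hQ := hf.apply_add_smul hbc s
  have hR := hf.apply_add_smul hca u
  simp only [← Units.smul_def] at hP hQ hR
  set p := a + t • b + (t * s) • c with hp
  have hpc : f (a + t • b) ≠ f c → f p = f (a + t • b) ∨ f p = f c :=
    hf.apply_add_smul (t := ↑(t * s))
  have hpa : f (b + s • c) ≠ f a → f p = f (b + s • c) ∨ f p = f a := by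
    have hpt : p = t • (b + s • c) + a := by rw [hp, smul_add, smul_smul]; abel
    have hadd := hf.apply_add (x := t • (b + s • c)) (y := a)
    rwa [← hpt, hf.apply_units_smul] at hadd
  have hpb : f (c + u • a) ≠ f b → f p = f (c + u • a) ∨ f p = f b := by
    have hpts : p = (t * s) • (c + u • a) + t • b := by
      rw [hp, smul_add, smul_smul, htsu, one_smul]; abel
    have hadd := hf.apply_add (x := (t * s) • (c + u • a)) (y := t • b)
    rwa [← hpts, hf.apply_units_smul, hf.apply_units_smul] at hadd
  -- The three alternatives for `f p` have no common value: depending on `h` they are `{f a, f c}`,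
  -- `{f b, f a}`, `{f c, f b}` or `{f b, f c}`, `{f c, f a}`, `{f a, f b}`.
  grind

/-- Read `a ≼ b` for `¬ b ≺ a`: across three colours, `a ≼ b` and `b ≼ c` imply `a ≺ c`. -/
theorem precedes_of_not_precedes [Finite K] (hf : RainbowFree_s5 K f) {a b c : V}
    (hab : f a ≠ f b) (hbc : f b ≠ f c) (hac : f a ≠ f c) (hba : ¬ Precedes K f b a)
    (hcb : ¬ Precedes K f c b) : Precedes K f a c :=
  ((hf.precedes_or_precedes_or_precedes hbc.symm hab.symm hac).resolve_left hcb).resolve_left hba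

theorem precedes_trans [Finite K] (hf : RainbowFree_s5 K f) {a b c : V} (hac : f a ≠ f c)
    (hab : Precedes K f a b) (hbc : Precedes K f b c) : Precedes K f a c :=
  hf.precedes_of_not_precedes hab.1 hbc.1 hac hab.asymm hbc.asymm

theorem lowerTwoStep_ssubset [Finite K] (hf : RainbowFree_s5 K f) {v w x : V} (hvw : f v ≠ f w)
    (hvx : f v ≠ f x) (hwx : f w ≠ f x) (h_w_x : ¬ Precedes K f w x) (h_x_v : ¬ Precedes K f x v) :
    lowerTwoStep K f v ⊂ lowerTwoStep K f w := by
  have h_v_w : Precedes K f v w := hf.precedes_of_not_precedes hvx hwx.symm hvw h_x_v h_w_x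
  refine (Set.ssubset_iff_of_subset ?_).2 ⟨v, Or.inl h_v_w, ?_⟩
  · rintro z (h_z_v | ⟨y, h_z_y, h_y_v⟩)
    · exact Or.inr ⟨v, h_z_v, h_v_w⟩
    obtain hyw | hyw := ne_or_eq (f y) (f w)
    · exact Or.inr ⟨y, h_z_y, hf.precedes_trans hyw h_y_v h_v_w⟩
    obtain hzx | hzx := eq_or_ne (f z) (f x)
    · have hzv : f z ≠ f v := hzx ▸ hvx.symm
      exact Or.inr ⟨v, hf.precedes_trans hzv h_z_y h_y_v, h_v_w⟩
    · have hyx : f y ≠ f x := hyw ▸ hwx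
      have h_y_x : Precedes K f y x := hf.precedes_of_not_precedes h_y_v.1 hvx hyx h_y_v.asymm h_x_v
      have h_z_x : Precedes K f z x := hf.precedes_trans hzx h_z_y h_y_x
      have hzw : f z ≠ f w := hyw ▸ h_z_y.1
      exact Or.inl (hf.precedes_of_not_precedes hzx hwx.symm hzw h_z_x.asymm h_w_x)
  · rintro (h_v_v | ⟨y, h_v_y, h_y_v⟩)
    · exact h_v_v.1 rfl
    · exact h_v_y.asymm h_y_v

theorem exists_forall_precedes_of_ne_of_ne [Finite K] [Finite V] (hf : RainbowFree_s5 K f) :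
    ∃ v w : V, ∀ x, f x ≠ f v → f x ≠ f w → Precedes K f x v := by
  obtain ⟨v, hv⟩ := Finite.exists_max fun v : V ↦ (lowerTwoStep K f v).ncard
  have hmax (w : V) : ¬ lowerTwoStep K f v ⊂ lowerTwoStep K f w := fun hlt ↦
    (Set.ncard_lt_ncard hlt).not_ge (hv w)
  by_contra! h
  obtain ⟨w, hwv, -, h_w_v⟩ := h v v
  obtain ⟨x, hxv, hxw, h_x_v⟩ := h v w
  by_cases h_w_x : Precedes K f w x
  · exact hmax x (hf.lowerTwoStep_ssubset hxv.symm hwv.symm hxw h_w_x.asymm h_w_v)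
  · exact hmax w (hf.lowerTwoStep_ssubset hwv.symm hxv.symm hxw.symm h_w_x h_x_v)

theorem add_smul_not_precedes (hf : RainbowFree_s5 K f) {u v x : V} (huv : f u ≠ f v)
    (hxv : f x ≠ f v) (h_u_v : ¬ Precedes K f u v) (h_x_u : Precedes K f x u) (t : K) :
    ¬ Precedes K f (u + t • x) v := by
  obtain ⟨r, hr⟩ := (hf.not_precedes_iff huv).1 h_u_v
  rw [hf.not_precedes_iff (by rwa [h_x_u.2])]
  refine ⟨r, ?_⟩
  have hv : f (u + t • x + r • v) = f u ∨ f (u + t • x + r • v) = f v := by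
    simpa only [h_x_u.2, Units.smul_def] using
      hf.apply_add_smul (x := u + t • x) (by rwa [h_x_u.2]) (r : K)
  have hx : f (u + r • v + t • x) = f u ∨ f (u + r • v + t • x) = f x := by
    simpa only [hr] using hf.apply_add_smul (x := u + r • v) (by rw [hr]; exact h_x_u.1.symm) t
  rw [add_right_comm] at hx
  rw [h_x_u.2]
  exact hv.resolve_right fun hfv ↦ hx.elim (fun h ↦ huv (h.symm.trans hfv))
    fun h ↦ hxv (h.symm.trans hfv)

theorem exists_ne_top_of_not_precedes [Finite K] (hf : RainbowFree_s5 K f) {v w : V}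
    (hwv : f w ≠ f v) (h_w_v : ¬ Precedes K f w v)
    (h : ∀ x, f x ≠ f v → f x ≠ f w → Precedes K f x v) :
    ∃ U : Submodule K V, U ≠ ⊤ ∧ ∀ u ∉ U, f u = f v ∨ f u = f w := by
  have hw : w ∉ Submodule.span K {x | f x ≠ f v ∧ f x ≠ f w} := by
    refine notMem_span_of_forall_add_smul_mem (T := {u | f u = f w ∧ ¬ Precedes K f u v}) ?_ ?_
      ⟨rfl, h_w_v⟩
    · rintro ⟨h0w, h_0_v⟩
      exact h_0_v ⟨h0w ▸ hwv, by simp only [smul_zero, add_zero, implies_true]⟩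
    · rintro u ⟨huw, h_u_v⟩ x ⟨hxv, hxw⟩ t
      have huv : f u ≠ f v := huw ▸ hwv
      have h_x_v : Precedes K f x v := h x hxv hxw
      have h_x_u : Precedes K f x u :=
        hf.precedes_of_not_precedes hxv huv.symm (huw ▸ hxw) h_x_v.asymm h_u_v
      exact ⟨(h_x_u.2 t).trans huw, hf.add_smul_not_precedes huv hxv h_u_v h_x_u t⟩
  refine ⟨_, (ne_of_mem_of_not_mem' Submodule.mem_top hw).symm, fun u hu ↦ ?_⟩
  by_contra! hne
  exact hu (Submodule.subset_span hne)

theorem precedes_add_smul (hf : RainbowFree_s5 K f) {u x y : V} (hxy : f x ≠ f y)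
    (h : ∀ z, f z = f x ∨ f z = f y → Precedes K f z u) (t : K) : Precedes K f y (u + t • x) := by
  have h_x_u : Precedes K f x u := h x (Or.inl rfl)
  have h_y_u : Precedes K f y u := h y (Or.inr rfl)
  refine ⟨by rw [h_x_u.2]; exact h_y_u.1, fun r ↦ ?_⟩
  rw [h_x_u.2]
  obtain rfl | ht := eq_or_ne t 0
  · rw [zero_smul, add_zero, h_y_u.2]
  · have htx : f (t • x) = f x := hf.apply_units_smul (Units.mk0 t ht) x
    have hz : f (t • x + r • y) = f x ∨ f (t • x + r • y) = f y := by
      simpa only [htx] using hf.apply_add_smul (x := t • x) (by rwa [htx]) r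
    simpa only [one_smul, add_assoc] using (h _ hz).2 1

theorem exists_ne_top_of_forall_precedes [Nontrivial V] (hf : RainbowFree_s5 K f) {v : V}
    (h : ∀ x, f x ≠ f v → Precedes K f x v)
    (hprec : ∀ u w, f w ≠ f u →
      (∀ x, f x ≠ f u → f x ≠ f w → Precedes K f x u) → Precedes K f w u) :
    ∃ U : Submodule K V, U ≠ ⊤ ∧ ∀ u ∉ U, f u = f v := by
  obtain hconst | ⟨x₀, hx₀⟩ := forall_or_exists_not fun x ↦ f x = f v
  · exact ⟨⊥, bot_ne_top, fun u _ ↦ hconst u⟩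
  have hv : v ∉ Submodule.span K {x | f x ≠ f v} := by
    refine notMem_span_of_forall_add_smul_mem
      (T := {u | f u = f v ∧ ∀ x, f x ≠ f v → Precedes K f x u}) ?_ ?_ ⟨rfl, h⟩
    · rintro ⟨h0v, h_0⟩
      have hx₀_eq : f x₀ = f 0 := by simpa only [one_smul, zero_add] using (h_0 x₀ hx₀).2 1
      exact hx₀ (hx₀_eq.trans h0v)
    · rintro u ⟨huv, hu⟩ x hxv t
      have htxv : f (u + t • x) = f v := ((hu x hxv).2 t).trans huv
      have hother (y : V) (hyv : f y ≠ f v) (hyx : f y ≠ f x) : Precedes K f y (u + t • x) := by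
        refine hf.precedes_add_smul hyx.symm (fun z hz ↦ hu z ?_) t
        obtain hz | hz := hz <;> rwa [hz]
      refine ⟨htxv, fun y hyv ↦ ?_⟩
      obtain hyx | hyx := ne_or_eq (f y) (f x)
      · exact hother y hyv hyx
      · exact hprec _ y (htxv ▸ hyv) fun z hz hzy ↦ hother z (htxv ▸ hz) (hyx ▸ hzy)
  refine ⟨_, (ne_of_mem_of_not_mem' Submodule.mem_top hv).symm, fun u hu ↦ ?_⟩
  by_contra hne
  exact hu (Submodule.subset_span hne)

theorem exists_ne_top_forall_notMem [Finite K] [Finite V] [Nontrivial V] (hf : RainbowFree_s5 K f) :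
    ∃ U : Submodule K V, U ≠ ⊤ ∧ ∃ i j, ∀ u ∉ U, f u = i ∨ f u = j := by
  by_cases hpair : ∃ v w, f w ≠ f v ∧ ¬ Precedes K f w v ∧
      ∀ x, f x ≠ f v → f x ≠ f w → Precedes K f x v
  · obtain ⟨v, w, hwv, h_w_v, h⟩ := hpair
    obtain ⟨U, hU, hcol⟩ := hf.exists_ne_top_of_not_precedes hwv h_w_v h
    exact ⟨U, hU, f v, f w, hcol⟩
  · have hprec (u w : V) (hwu : f w ≠ f u) (h : ∀ x, f x ≠ f u → f x ≠ f w → Precedes K f x u) :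
        Precedes K f w u := by
      by_contra h_w_u
      exact hpair ⟨u, w, hwu, h_w_u, h⟩
    obtain ⟨v, w, hvw⟩ := hf.exists_forall_precedes_of_ne_of_ne
    have htop (x : V) (hxv : f x ≠ f v) : Precedes K f x v := by
      obtain hxw | hxw := ne_or_eq (f x) (f w)
      · exact hvw x hxv hxw
      · exact hprec v x hxv fun y hyv hyx ↦ hvw y hyv (hxw ▸ hyx)
    obtain ⟨U, hU, hcol⟩ := hf.exists_ne_top_of_forall_precedes htop hprec
    exact ⟨U, hU, f v, f v, fun u hu ↦ Or.inl (hcol u hu)⟩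

end RainbowFree_s5

end RainbowFree_s5

/-- The points of the projective space of `V`, as one-dimensional subspaces; `ProjPoint K n` is by
definition `Point K (Fin n → K)`. -/
abbrev Point (K V : Type*) [DivisionRing K] [AddCommGroup V] [Module K V] : Type _ :=
  {P : Submodule K V // Module.finrank K P = 1}

open Classical in
/-- The colouring of vectors induced by a colouring of points: a nonzero vector has the colour of
the point it spans, and `0` has the additional colour `none`. -/
noncomputable def vectorColour {K V S : Type*} [DivisionRing K] [AddCommGroup V] [Module K V]
    (c : Point K V → S) (v : V) : Option S :=
  if h : v ≠ 0 then some (c ⟨K ∙ v, finrank_span_singleton h⟩) else none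

section Point

variable {K V S : Type*} [DivisionRing K] [AddCommGroup V] [Module K V] {c : Point K V → S}

theorem vectorColour_eq_of_mem {P : Point K V} {v : V} (hv : v ∈ P.1) (h0 : v ≠ 0) :
    vectorColour c v = some (c P) := by
  have := Module.finite_of_finrank_eq_succ P.2
  have hspan : K ∙ v = P.1 := Submodule.eq_of_le_of_finrank_eq
    ((Submodule.span_singleton_le_iff_mem v P.1).2 hv) ((finrank_span_singleton h0).trans P.2.symm)
  simp only [vectorColour, dif_pos h0, hspan]

theorem vectorColour_units_smul (t : Kˣ) (v : V) : vectorColour c (t • v) = vectorColour c v := by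
  obtain rfl | hv := eq_or_ne v 0
  · rw [smul_zero]
  let P : Point K V := ⟨K ∙ v, finrank_span_singleton hv⟩
  have hmem : v ∈ P.1 := Submodule.mem_span_singleton_self v
  have hsmul : t • v ∈ P.1 := P.1.smul_mem (t : K) hmem
  rw [vectorColour_eq_of_mem hmem hv,
    vectorColour_eq_of_mem hsmul ((smul_ne_zero_iff_ne t).2 hv)]

theorem linearIndependent_pair_of_vectorColour_ne {x y : V} (hx : x ≠ 0) (hy : y ≠ 0)
    (hxy : vectorColour c x ≠ vectorColour c y) : LinearIndependent K ![x, y] := by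
  rw [LinearIndependent.pair_iff' hx]
  rintro t rfl
  have ht : t ≠ 0 := (smul_ne_zero_iff.1 hy).1
  exact hxy (vectorColour_units_smul (Units.mk0 t ht) x).symm

theorem vectorColour_eq_or_eq_or_eq [Finite V] {L : Submodule K V}
    (hL : {s : S | ∃ P : Point K V, P.1 ≤ L ∧ c P = s}.ncard ≤ 2) {x y z : V} (hx : x ∈ L)
    (hy : y ∈ L) (hz : z ∈ L) (hx0 : x ≠ 0) (hy0 : y ≠ 0) (hz0 : z ≠ 0) :
    vectorColour c x = vectorColour c y ∨ vectorColour c x = vectorColour c z ∨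
      vectorColour c y = vectorColour c z := by
  have hcolour {v : V} (hv : v ∈ L) (hv0 : v ≠ 0) :
      ∃ s ∈ {s : S | ∃ P : Point K V, P.1 ≤ L ∧ c P = s}, vectorColour c v = some s :=
    ⟨_, ⟨⟨K ∙ v, finrank_span_singleton hv0⟩, (Submodule.span_singleton_le_iff_mem v L).2 hv, rfl⟩,
      vectorColour_eq_of_mem (Submodule.mem_span_singleton_self v) hv0⟩
  obtain ⟨i, hi, hxi⟩ := hcolour hx hx0
  obtain ⟨j, hj, hyj⟩ := hcolour hy hy0
  obtain ⟨k, hk, hzk⟩ := hcolour hz hz0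
  have hfin : {s : S | ∃ P : Point K V, P.1 ≤ L ∧ c P = s}.Finite :=
    Set.toFinite (c '' {P | P.1 ≤ L})
  simp only [hxi, hyj, hzk, Option.some.injEq]
  by_contra! ⟨hij, hik, hjk⟩
  exact hL.not_gt ((Set.two_lt_ncard_iff hfin).2 ⟨i, j, k, hi, hj, hk, hij, hik, hjk⟩)

theorem rainbowFree_vectorColour [Finite V]
    (hline : ∀ L : Submodule K V, Module.finrank K L = 2 →
      {s : S | ∃ P : Point K V, P.1 ≤ L ∧ c P = s}.ncard ≤ 2) :
    RainbowFree_s5 K (vectorColour c) where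
  apply_units_smul := vectorColour_units_smul
  apply_add {x y} hne := by
    obtain rfl | hx := eq_or_ne x 0
    · rw [zero_add]
      exact Or.inr rfl
    obtain rfl | hy := eq_or_ne y 0
    · rw [add_zero]
      exact Or.inl rfl
    have hli : LinearIndependent K ![x, y] := linearIndependent_pair_of_vectorColour_ne hx hy hne
    have hxy : x + y ≠ 0 := fun h0 ↦
      one_ne_zero (LinearIndependent.pair_iff.1 hli 1 1 (by simpa only [one_smul] using h0)).1
    have hrank : Module.finrank K (Submodule.span K {x, y}) = 2 := by
      rw [← Matrix.range_cons_cons_empty x y ![], finrank_span_eq_card hli, Fintype.card_fin]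
    have hxL : x ∈ Submodule.span K {x, y} := Submodule.mem_span_of_mem (by simp)
    have hyL : y ∈ Submodule.span K {x, y} := Submodule.mem_span_of_mem (by simp)
    have heq := vectorColour_eq_or_eq_or_eq (hline _ hrank) (add_mem hxL hyL) hxL hyL hxy hx hy
    exact heq.imp_right (·.resolve_right hne)

theorem RainbowFree_s5.exists_lt_ncard_le_two [Finite K] [Finite V]
    (hc : RainbowFree_s5 K (vectorColour c)) {W : Submodule K V} (hW : W ≠ ⊥) :
    ∃ U < W, {s : S | ∃ P : Point K V, P.1 ≤ W ∧ ¬ P.1 ≤ U ∧ c P = s}.ncard ≤ 2 := by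
  have : Nontrivial W := Submodule.nontrivial_iff_ne_bot.2 hW
  obtain ⟨U, hU, i, j, hij⟩ := (hc.comp_linearMap W.subtype).exists_ne_top_forall_notMem
  refine ⟨U.map W.subtype, ?_, ?_⟩
  · simpa only [Submodule.map_subtype_top] using
      Submodule.map_strictMono_of_injective W.subtype_injective hU.lt_top
  have hsub : some '' {s : S | ∃ P : Point K V, P.1 ≤ W ∧ ¬ P.1 ≤ U.map W.subtype ∧ c P = s} ⊆
      {i, j} := by
    rintro _ ⟨_, ⟨P, hPW, hPU, rfl⟩, rfl⟩
    obtain ⟨v, hvP, hvU⟩ := SetLike.not_le_iff_exists.1 hPU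
    have hv0 : v ≠ 0 := by rintro rfl; exact hvU (zero_mem _)
    rw [← vectorColour_eq_of_mem hvP hv0]
    exact hij ⟨v, hPW hvP⟩ fun hmem ↦ hvU ⟨_, hmem, rfl⟩
  calc _ = (some '' {s : S | ∃ P : Point K V, P.1 ≤ W ∧ ¬ P.1 ≤ U.map W.subtype ∧ c P = s}).ncard :=
        (Set.ncard_image_of_injective _ (Option.some_injective S)).symm
    _ ≤ ({i, j} : Set (Option S)).ncard := Set.ncard_le_ncard hsub (Set.toFinite _)
    _ ≤ 2 := (Set.ncard_insert_le i {j}).trans_eq (by rw [Set.ncard_singleton])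

end Point

theorem stmt5_general {K V S : Type*} [DivisionRing K] [Finite K] [AddCommGroup V] [Module K V]
    [FiniteDimensional K V] (c : Point K V → S)
    (hline : ∀ L : Submodule K V, Module.finrank K L = 2 →
      {s : S | ∃ P : Point K V, P.1 ≤ L ∧ c P = s}.ncard ≤ 2) :
    ∃ (k : ℕ) (W : ℕ → Submodule K V),
      W 0 = ⊥ ∧ W k = ⊤ ∧ (∀ i < k, W i ≤ W (i + 1)) ∧
      ∀ i < k, {s : S | ∃ P : Point K V,
        P.1 ≤ W (i + 1) ∧ ¬ P.1 ≤ W i ∧ c P = s}.ncard ≤ 2 := by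
  have : Finite V := Module.finite_of_finite K
  have hc : RainbowFree_s5 K (vectorColour c) := rainbowFree_vectorColour hline
  obtain ⟨k, W, h0, hk, hW⟩ := exists_seq_of_forall_exists_lt
    (r := fun U W ↦ {s : S | ∃ P : Point K V, P.1 ≤ W ∧ ¬ P.1 ≤ U ∧ c P = s}.ncard ≤ 2)
    (fun _ ↦ hc.exists_lt_ncard_le_two) ⊤
  exact ⟨k, W, h0, hk, fun i hi ↦ (hW i hi).1.le, fun i hi ↦ (hW i hi).2⟩

/-- If `c` is a colouring of the points of `𝔽_qⁿ` such that at most two colours appear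
among the points of each two-dimensional subspace, then there is a chain of subspaces
`{0} = W₀ ⊆ W₁ ⊆ … ⊆ W_k = 𝔽_qⁿ` such that at most two colours appear among the points
contained in `W_{i+1}` but not in `W_i`, for each `i < k`. -/
theorem stmt5 {K : Type} [Field K] [Fintype K] {n : ℕ} {S : Type} (c : ProjPoint K n → S)
    (hline : ∀ L : Submodule K (Fin n → K), Module.finrank K L = 2 →
      {s : S | ∃ P : ProjPoint K n, P.1 ≤ L ∧ c P = s}.ncard ≤ 2) :
    ∃ (k : ℕ) (W : ℕ → Submodule K (Fin n → K)),
      W 0 = ⊥ ∧ W k = ⊤ ∧ (∀ i < k, W i ≤ W (i + 1)) ∧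
      ∀ i < k, {s : S | ∃ P : ProjPoint K n,
        P.1 ≤ W (i + 1) ∧ ¬ P.1 ≤ W i ∧ c P = s}.ncard ≤ 2 :=
  stmt5_general c hline
end

section
/- Let n ≥ 2 and let c be a colouring of the points of 𝔽₃ⁿ with two colours such that no two-dimensional linear subspace of 𝔽₃ⁿ contains exactly two points of each colour (every two-dimensional subspace of 𝔽₃ⁿ contains exactly four points). Then there is a linear subspace of 𝔽₃ⁿ of dimension at least ⌈n/2⌉ all of whose points receive the same colour. Moreover, this is best possible: there exists a two-colouring of the points of 𝔽₃ⁿ in which no two-dimensional subspace contains exactly two points of each colour and every subspace all of whose points have the same colour has dimension at most ⌈n/2⌉. -/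
/-- A point of `𝔽₃ⁿ`: a one-dimensional linear subspace. -/
def ProjPoint3 (n : ℕ) : Type :=
  {P : Submodule (ZMod 3) (Fin n → ZMod 3) // Module.finrank (ZMod 3) P = 1}

/-- A two-colouring of the points of `𝔽₃ⁿ` is *balanced-line-free* if no
two-dimensional subspace contains exactly two points of each colour. -/
def BalancedLineFree {n : ℕ} (c : ProjPoint3 n → Bool) : Prop :=
  ¬ ∃ L : Submodule (ZMod 3) (Fin n → ZMod 3), Module.finrank (ZMod 3) L = 2 ∧
    {P : ProjPoint3 n | P.1 ≤ L ∧ c P = true}.ncard = 2 ∧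
    {P : ProjPoint3 n | P.1 ≤ L ∧ c P = false}.ncard = 2


/-!
Say that `s` dominates `p` if they have different colours and the other two points of the line
through them have the colour of `s`. In an unbalanced colouring two points of different colours
dominate one another in exactly one direction, and domination is well founded because it has no
4-cycles. Take an undominated point `p` of a subspace `U`. The points of the other colour span at
most themselves together with the points of lines joining two of them; `p` dominates them all, so it
is not in their span. Hence some hyperplane of `U` has all points of `U` outside it of one colour.
By induction every subspace is spanned by one monochromatic subspace of each colour, and the larger
of these two has at least half the dimension.

Conversely, colouring a vector by the parity of the position of its last nonzero entry is
unbalanced, because this position is an ultrametric length, and a monochromatic subspace injects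
into the coordinates of one parity.
-/

open Module

/-- A colouring of the vectors of `V` is unbalanced if it is even and does not split any
`x, y, x + y, x - y` two against two. Over `𝔽₃`, for independent `x` and `y` these vectors represent
the points of the plane spanned by `x` and `y`, and the last two fields treat the cases of `x` and
`y` having different colours and the same colour. The colour of `0` is irrelevant. -/
structure IsUnbalanced {V : Type*} [AddCommGroup V] (f : V → Bool) : Prop where
  map_neg : ∀ x, f (-x) = f x
  map_add_eq_map_sub : ∀ {x y}, f x ≠ f y → f (x + y) = f (x - y)
  map_add_or_map_sub : ∀ {x y}, f x = f y → f (x + y) = f x ∨ f (x - y) = f x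

/-- The vector `s` dominates `p` for the colouring `f` if, on the line through the points of `s` and
`p`, only the point of `p` does not have the colour of `s`. -/
def Dominates {V : Type*} [AddCommGroup V] (f : V → Bool) (s p : V) : Prop :=
  f s ≠ f p ∧ f (s + p) = f s ∧ f (s - p) = f s

/-- All points of the subspace `W` have colour `b`; the colour of `0` is ignored. -/
def IsMonochromatic {K V : Type*} [DivisionRing K] [AddCommGroup V] [Module K V] (f : V → Bool)
    (W : Submodule K V) (b : Bool) : Prop :=
  ∀ x ∈ W, x ≠ 0 → f x = b

lemma bool_eq_of_ne_of_ne {a b c : Bool} (ha : a ≠ c) (hb : b ≠ c) : a = b :=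
  (Bool.eq_not_of_ne ha).trans (Bool.eq_not_of_ne hb).symm

section Domination

variable {V : Type*} [AddCommGroup V] {f : V → Bool} {p q r s x y : V}

lemma Dominates.asymm (h : Dominates f x y) : ¬ Dominates f y x := fun h' =>
  h.1 (h.2.1.symm.trans ((congrArg f (add_comm x y)).trans h'.2.1))

lemma Dominates.left_ne_zero (hf : IsUnbalanced f) (h : Dominates f s p) : s ≠ 0 := by
  rintro rfl
  exact h.1 (by simpa [hf.map_neg] using h.2.2.symm)

lemma IsUnbalanced.dominates_or_dominates (hf : IsUnbalanced f) (h : f x ≠ f y) :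
    Dominates f x y ∨ Dominates f y x := by
  have hadd : f (x + y) = f (x - y) := hf.map_add_eq_map_sub h
  have hsub : f (y - x) = f (x - y) := by rw [← hf.map_neg, neg_sub]
  unfold Dominates
  rw [add_comm y x, hsub, hadd]
  revert h
  cases f x <;> cases f y <;> cases f (x - y) <;> decide

lemma Dominates.add_dominates (hf : IsUnbalanced f) (hsp : Dominates f s p)
    (hpq : Dominates f p q) : f (s + q) = f s ∧ Dominates f (s + q) p := by
  obtain ⟨hne, hsp₁, -⟩ := hsp
  obtain ⟨hne', hpq₁, hpq₂⟩ := hpq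
  have hsq : f s = f q := bool_eq_of_ne_of_ne hne hne'.symm
  have hα : f (s - q - p) = f (s + q + p) := by
    have := hf.map_add_eq_map_sub (x := s) (y := p + q) (by rwa [hpq₁])
    rw [show s + q + p = s + (p + q) by abel, this]
    congr 1; abel
  have hβ : f (s - q + p) = f (s + q - p) := by
    have := hf.map_add_eq_map_sub (x := s) (y := p - q) (by rwa [hpq₂])
    rw [show s - q + p = s + (p - q) by abel, this]
    congr 1; abel
  have hαβ : f (s + q + p) = f s ∨ f (s + q - p) = f s := by
    have := hf.map_add_or_map_sub (x := s + p) (y := q) (by rw [hsp₁, hsq])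
    rwa [hsp₁, add_right_comm, show s + p - q = s - q + p by abel, hβ] at this
  have hα_eq_β : f (s + q + p) = f (s + q - p) := by
    -- otherwise both `s + q` and `s - q` have the colour of `p`, which balances the line of `s, q`
    by_contra hne_αβ
    have h₁ : f (s + q) = f p := by
      by_contra h
      exact hne_αβ (hf.map_add_eq_map_sub h)
    have h₂ : f (s - q) = f p := by
      by_contra h
      exact hne_αβ (by rw [← hα, ← hβ, hf.map_add_eq_map_sub h])
    rcases hf.map_add_or_map_sub hsq with h | h
    · exact hne (h.symm.trans h₁)
    · exact hne (h.symm.trans h₂)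
  have hαs : f (s + q + p) = f s := by simpa only [← hα_eq_β, or_self] using hαβ
  have hs : f (s + q) = f s := by
    by_contra h
    have hp : f (s + q) = f p := bool_eq_of_ne_of_ne h hne.symm
    rcases hf.map_add_or_map_sub hp with h' | h'
    · exact h (h'.symm.trans hαs)
    · exact h (h'.symm.trans (hα_eq_β.symm.trans hαs))
  exact ⟨hs, hs.trans_ne hne, hαs.trans hs.symm, (hα_eq_β.symm.trans hαs).trans hs.symm⟩

end Domination

lemma IsMonochromatic.sup_span_singleton {K V : Type*} [DivisionRing K] [AddCommGroup V]
    [Module K V] {f : V → Bool} {A H : Submodule K V} {b : Bool} {v : V}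
    (hA : IsMonochromatic f A b) (hAH : A ≤ H) (hv : v ∉ H)
    (hb : ∀ x ∈ H ⊔ K ∙ v, x ∉ H → f x = b) : IsMonochromatic f (A ⊔ K ∙ v) b := by
  intro x hx hx0
  by_cases hxH : x ∈ H
  · obtain ⟨a, ha, w, hw, rfl⟩ := Submodule.mem_sup.1 hx
    obtain ⟨t, rfl⟩ := Submodule.mem_span_singleton.1 hw
    have htv : t • v ∈ H := (H.add_mem_iff_right (hAH ha)).1 hxH
    obtain rfl : t = 0 := by
      by_contra ht
      exact hv ((H.smul_mem_iff ht).1 htv)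
    rw [zero_smul, add_zero] at hx0 ⊢
    exact hA a ha hx0
  · exact hb x (sup_le_sup_right hAH _ hx) hxH

section CharThree

variable {V : Type*} [AddCommGroup V] [Module (ZMod 3) V] {f : V → Bool} {p q r s : V}

lemma add_self_eq_neg (x : V) : x + x = -x :=
  eq_neg_of_add_eq_zero_left (by simpa [succ_nsmul] using ZModModule.char_nsmul_eq_zero 3 x)

lemma Dominates.add_right (hf : IsUnbalanced f) (hp : Dominates f s p) (hr : Dominates f s r)
    (hpr : f (p + r) = f p) : Dominates f s (p + r) := by
  obtain ⟨hne, hp₁, hp₂⟩ := hp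
  obtain ⟨hne', hr₁, -⟩ := hr
  have hs : f s ≠ f (p + r) := by rwa [hpr]
  have hsub : f (s + (p + r)) = f (s - (p + r)) := hf.map_add_eq_map_sub hs
  suffices h : f (s - (p + r)) = f s from ⟨hs, hsub.trans h, h⟩
  by_contra h
  have h₁ : f (s + (p - r)) = f (s - (p + r)) := by
    have := hf.map_add_eq_map_sub (x := s + p) (y := r) (by rwa [hp₁])
    rw [← hsub, ← add_assoc, this, add_sub_assoc]
  have h₂ : f (s - (p - r)) = f (s - (p + r)) := by
    have := hf.map_add_eq_map_sub (x := s - p) (y := r) (by rwa [hp₂])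
    rw [← sub_sub, ← this, sub_sub_eq_add_sub, sub_add_eq_add_sub]
  have hd : f (p - r) = f s := by
    have := hf.map_add_or_map_sub (hp₁.trans hr₁.symm)
    rw [add_add_add_comm, add_self_eq_neg, neg_add_eq_sub, ← neg_sub, hf.map_neg,
      add_sub_add_left_eq_sub, hp₁] at this
    exact this.resolve_left h
  rcases hf.map_add_or_map_sub hd.symm with h' | h'
  · exact h (h₁.symm.trans h')
  · exact h (h₂.symm.trans h')

lemma IsUnbalanced.not_dominates_cycle (hf : IsUnbalanced f) (hpq : Dominates f p q)
    (hqr : Dominates f q r) (hrs : Dominates f r s) : ¬ Dominates f s p := by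
  intro hsp
  obtain ⟨hpr, hpr_q⟩ := hpq.add_dominates hf hqr
  obtain ⟨hqs, hqs_r⟩ := hqr.add_dominates hf hrs
  obtain ⟨-, hpr_s⟩ := hrs.add_dominates hf hsp
  obtain ⟨-, hqs_p⟩ := hsp.add_dominates hf hpq
  rw [add_comm] at hpr_s hqs_p
  exact (hpr_q.add_right hf hpr_s hqs).asymm (hqs_p.add_right hf hqs_r hpr)

lemma Dominates.trans₃ (hf : IsUnbalanced f) (hpq : Dominates f p q) (hqr : Dominates f q r)
    (hrs : Dominates f r s) : Dominates f p s := by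
  have hpr : f p = f r := bool_eq_of_ne_of_ne hpq.1 hqr.1.symm
  have hne : f p ≠ f s := hpr.trans_ne hrs.1
  exact (hf.dominates_or_dominates hne).resolve_right (hf.not_dominates_cycle hpq hqr hrs)

lemma IsUnbalanced.wellFounded_dominates [Finite V] (hf : IsUnbalanced f) :
    WellFounded (Dominates f) := by
  -- by `trans₃`, the chains of at most two steps already form the transitive closure
  let R (p q : V) : Prop := Dominates f p q ∨ ∃ s, Dominates f p s ∧ Dominates f s q
  have : IsTrans V R := ⟨by
    rintro p q r (hpq | ⟨s, hps, hsq⟩) (hqr | ⟨t, hqt, htr⟩)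
    · exact .inr ⟨q, hpq, hqr⟩
    · exact .inl (hpq.trans₃ hf hqt htr)
    · exact .inl (hps.trans₃ hf hsq hqr)
    · exact .inr ⟨t, hps.trans₃ hf hsq hqt, htr⟩⟩
  have : Std.Irrefl R := ⟨by
    rintro p (h | ⟨s, hps, hsp⟩)
    · exact h.asymm h
    · exact hps.asymm hsp⟩
  exact Subrelation.wf Or.inl (Finite.wellFounded_of_trans_of_irrefl R)

lemma exists_add_eq_of_mem_span {S : Set V} (h0 : 0 ∈ S)
    (hS : ∀ a ∈ S, ∀ b ∈ S, a + b ∈ S ∨ a - b ∈ S) {x : V}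
    (hx : x ∈ Submodule.span (ZMod 3) S) : ∃ a ∈ S, ∃ b ∈ S, a + b = x := by
  have add_mem {a b c : V} (ha : a ∈ S) (hb : b ∈ S) (hc : c ∈ S) :
      ∃ d ∈ S, ∃ e ∈ S, d + e = a + b + c := by
    rcases hS a ha b hb with hab | hab
    · exact ⟨a + b, hab, c, hc, rfl⟩
    rcases hS c hc b hb with hcb | hcb
    · exact ⟨a, ha, c + b, hcb, by abel⟩
    · refine ⟨a - b, hab, c - b, hcb, ?_⟩
      rw [sub_add_sub_comm, add_self_eq_neg]
      abel
  have add_closed {x y : V} (hx : ∃ a ∈ S, ∃ b ∈ S, a + b = x)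
      (hy : ∃ a ∈ S, ∃ b ∈ S, a + b = y) : ∃ a ∈ S, ∃ b ∈ S, a + b = x + y := by
    obtain ⟨a, ha, b, hb, rfl⟩ := hx
    obtain ⟨c, hc, d, hd, rfl⟩ := hy
    obtain ⟨a', ha', b', hb', h⟩ := add_mem ha hb hc
    rw [← add_assoc, ← h]
    exact add_mem ha' hb' hd
  induction hx using Submodule.span_induction with
  | mem x hx => exact ⟨x, hx, 0, h0, add_zero x⟩
  | zero => exact ⟨0, h0, 0, h0, add_zero 0⟩
  | add x y _ _ hx hy => exact add_closed hx hy
  | smul c x _ hx =>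
    have hc : ∀ c : ZMod 3, c = 0 ∨ c = 1 ∨ c = 1 + 1 := by decide
    rcases hc c with rfl | rfl | rfl
    · exact ⟨0, h0, 0, h0, by simp⟩
    · rwa [one_smul]
    · rw [add_smul, one_smul]
      exact add_closed hx hx

lemma IsUnbalanced.exists_covBy_forall_notMem [Finite V] (hf : IsUnbalanced f)
    {U : Submodule (ZMod 3) V} (hU : U ≠ ⊥) :
    ∃ H, H ⋖ U ∧ ∃ b, ∀ x ∈ U, x ∉ H → f x = b := by
  obtain ⟨p, ⟨hpU, hp0⟩, hp⟩ :=
    hf.wellFounded_dominates.has_min {x | x ∈ U ∧ x ≠ 0} (U.exists_mem_ne_zero_of_ne_bot hU)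
  have hdom {a : V} (haU : a ∈ U) (ha : f a ≠ f p) : Dominates f p a :=
    (hf.dominates_or_dominates ha).resolve_left fun h => hp a ⟨haU, h.left_ne_zero hf⟩ h
  let S : Set V := {x | x ∈ U ∧ (x = 0 ∨ f x ≠ f p)}
  have hS : ∀ a ∈ S, ∀ b ∈ S, a + b ∈ S ∨ a - b ∈ S := by
    rintro a ⟨haU, rfl | ha⟩ b ⟨hbU, hb⟩
    · exact .inl (by rw [zero_add]; exact ⟨hbU, hb⟩)
    obtain rfl | hb := hb
    · exact .inl (by rw [add_zero]; exact ⟨haU, .inr ha⟩)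
    refine (hf.map_add_or_map_sub (x := a) (y := b) (bool_eq_of_ne_of_ne ha hb)).imp
      (fun h => ⟨U.add_mem haU hbU, .inr (h.trans_ne ha)⟩)
      (fun h => ⟨U.sub_mem haU hbU, .inr (h.trans_ne ha)⟩)
  have hpS : p ∉ Submodule.span (ZMod 3) S := by
    intro h
    obtain ⟨a, ⟨haU, ha⟩, b, ⟨-, hb⟩, rfl⟩ :=
      exists_add_eq_of_mem_span (S := S) ⟨U.zero_mem, .inl rfl⟩ hS h
    rcases ha with rfl | ha
    · simp_all
    rcases hb with rfl | hb
    · simp_all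
    · exact hb (by simpa using (hdom haU ha).2.2)
  have hlt : Submodule.span (ZMod 3) S < U :=
    lt_of_le_of_ne (Submodule.span_le.2 fun x hx => hx.1) fun h => hpS (h ▸ hpU)
  obtain ⟨H, hSH, hHU⟩ := exists_le_covBy_of_lt hlt
  refine ⟨H, hHU, f p, fun x hxU hxH => ?_⟩
  by_contra hx
  exact hxH (hSH (Submodule.subset_span ⟨hxU, .inr hx⟩))

theorem IsUnbalanced.exists_isMonochromatic_iSup_eq [Finite V] (hf : IsUnbalanced f)
    (U : Submodule (ZMod 3) V) :
    ∃ A : Bool → Submodule (ZMod 3) V, (∀ b, IsMonochromatic f (A b) b) ∧ ⨆ b, A b = U := by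
  induction U using WellFoundedLT.induction with
  | ind U ih =>
    obtain rfl | hU := eq_or_ne U ⊥
    · exact ⟨fun _ => ⊥, fun b x hx hx0 => absurd hx hx0, iSup_bot⟩
    obtain ⟨H, hHU, b, hb⟩ := hf.exists_covBy_forall_notMem hU
    obtain ⟨A, hA, rfl⟩ := ih H hHU.lt
    obtain ⟨v, hvU, hvA⟩ := SetLike.exists_of_lt hHU.lt
    have hAv : (⨆ i, A i) ⊔ ZMod 3 ∙ v = U :=
      (hHU.eq_or_eq le_sup_left (sup_le hHU.le (by simpa))).resolve_left (by simpa)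
    refine ⟨Function.update A b (A b ⊔ ZMod 3 ∙ v), fun i => ?_, ?_⟩
    · obtain rfl | hi := eq_or_ne i b
      · rw [Function.update_self]
        exact (hA i).sup_span_singleton (le_iSup A i) hvA (by rwa [hAv])
      · rw [Function.update_of_ne hi]
        exact hA i
    · rw [← hAv, iSup_bool_eq, iSup_bool_eq]
      cases b
      · simp [sup_assoc]
      · simp [sup_right_comm]

end CharThree

namespace ProjPoint3

variable {n : ℕ} {x y : Fin n → ZMod 3}

/-- The point spanned by a nonzero vector. -/
def mk (x : Fin n → ZMod 3) (hx : x ≠ 0) : ProjPoint3 n :=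
  ⟨ZMod 3 ∙ x, finrank_span_singleton hx⟩

lemma mk_eq_mk_iff (hx : x ≠ 0) (hy : y ≠ 0) : mk x hx = mk y hy ↔ x = y ∨ x = -y := by
  have hunits : ∀ u : (ZMod 3)ˣ, u = 1 ∨ u = -1 := by decide
  refine Subtype.ext_iff.trans (Submodule.span_singleton_eq_span_singleton.trans ⟨?_, ?_⟩)
  · rintro ⟨u, rfl⟩
    obtain rfl | rfl := hunits u <;> simp
  · rintro (rfl | rfl)
    · exact ⟨1, one_smul _ _⟩
    · exact ⟨-1, by simp⟩

lemma exists_mk_eq (P : ProjPoint3 n) : ∃ x hx, mk x hx = P := by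
  have hP : finrank (ZMod 3) P.1 = 1 := P.2
  obtain ⟨x, hxP, hx⟩ := P.1.exists_mem_ne_zero_of_ne_bot <| by
    intro h
    rw [h, finrank_bot] at hP
    exact zero_ne_one hP
  refine ⟨x, hx, Subtype.ext (Submodule.eq_of_le_of_finrank_eq ?_ ?_)⟩
  · exact (Submodule.span_singleton_le_iff_mem x P.1).2 hxP
  · exact (mk x hx).2.trans hP.symm

lemma mk_le_iff (hx : x ≠ 0) {W : Submodule (ZMod 3) (Fin n → ZMod 3)} :
    (mk x hx).1 ≤ W ↔ x ∈ W :=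
  Submodule.span_singleton_le_iff_mem x W

end ProjPoint3

open ProjPoint3

/-- The colouring `f` of vectors lifts the colouring `c` of points: every nonzero vector has the
colour of the point it spans, while `f 0` is arbitrary. -/
def IsLift {n : ℕ} (f : (Fin n → ZMod 3) → Bool) (c : ProjPoint3 n → Bool) : Prop :=
  ∀ x hx, c (mk x hx) = f x

section Lift

variable {n : ℕ} {f : (Fin n → ZMod 3) → Bool} {c : ProjPoint3 n → Bool}

lemma exists_isLift (c : ProjPoint3 n → Bool) : ∃ f, IsLift f c := by
  classical
  exact ⟨fun x => if hx : x = 0 then true else c (mk x hx), fun x hx => by simp [hx]⟩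

lemma exists_isLift_of_map_neg (hf : ∀ x, f (-x) = f x) : ∃ c, IsLift f c := by
  choose rep hrep₀ hrep using exists_mk_eq (n := n)
  refine ⟨f ∘ rep, fun x hx => ?_⟩
  obtain h | h := (mk_eq_mk_iff _ _).1 (hrep (mk x hx))
  · exact congrArg f h
  · exact (congrArg f h).trans (hf x)

lemma IsLift.apply_neg (h : IsLift f c) (x : Fin n → ZMod 3) : f (-x) = f x := by
  obtain rfl | hx := eq_or_ne x 0
  · rw [neg_zero]
  · rw [← h x hx, ← h (-x) (neg_ne_zero.2 hx), (mk_eq_mk_iff _ _).2 (.inr rfl)]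

lemma IsLift.monochromatic_iff (h : IsLift f c) {W : Submodule (ZMod 3) (Fin n → ZMod 3)} :
    (∀ P Q : ProjPoint3 n, P.1 ≤ W → Q.1 ≤ W → c P = c Q) ↔ ∃ b, IsMonochromatic f W b := by
  constructor
  · intro hW
    by_cases hbot : W = ⊥
    · exact ⟨true, fun x hx hx₀ => absurd (by simpa [hbot] using hx) hx₀⟩
    obtain ⟨y, hyW, hy⟩ := W.exists_mem_ne_zero_of_ne_bot hbot
    refine ⟨f y, fun x hxW hx => ?_⟩
    rw [← h x hx, ← h y hy]
    exact hW _ _ ((mk_le_iff hx).2 hxW) ((mk_le_iff hy).2 hyW)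
  · rintro ⟨b, hb⟩ P Q hP hQ
    obtain ⟨x, hx, rfl⟩ := exists_mk_eq P
    obtain ⟨y, hy, rfl⟩ := exists_mk_eq Q
    rw [h, h, hb x ((mk_le_iff hx).1 hP) hx, hb y ((mk_le_iff hy).1 hQ) hy]

/-- Vectors representing the four points of `𝔽₃ × 𝔽₃`, the model of a two-dimensional subspace. -/
def lineRep : Fin 4 → ZMod 3 × ZMod 3 := ![(1, 0), (0, 1), (1, 1), (1, -1)]

lemma lineRep_ne_zero : ∀ i, lineRep i ≠ 0 := by decide

lemma eq_of_lineRep_eq_or_eq_neg :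
    ∀ i j, lineRep i = lineRep j ∨ lineRep i = -lineRep j → i = j := by decide

lemma exists_eq_lineRep_or_eq_neg : ∀ w ≠ 0, ∃ i, w = lineRep i ∨ w = -lineRep i := by decide

lemma IsLift.ncard_points_range (h : IsLift f c) {g : ZMod 3 × ZMod 3 →ₗ[ZMod 3] Fin n → ZMod 3}
    (hg : Function.Injective g) (b : Bool) :
    {P : ProjPoint3 n | P.1 ≤ LinearMap.range g ∧ c P = b}.ncard =
      {i | f (g (lineRep i)) = b}.ncard := by
  have hne (w) (hw : w ≠ 0) : g w ≠ 0 := (map_ne_zero_iff g hg).2 hw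
  let φ (i : Fin 4) : ProjPoint3 n := mk (g (lineRep i)) (hne _ (lineRep_ne_zero i))
  have hφ : Function.Injective φ := by
    intro i j hij
    refine eq_of_lineRep_eq_or_eq_neg i j ?_
    rwa [mk_eq_mk_iff, ← map_neg, hg.eq_iff, hg.eq_iff] at hij
  rw [← Set.ncard_image_of_injective _ hφ]
  congr 1
  ext P
  constructor
  · rintro ⟨hP, rfl⟩
    obtain ⟨x, hx, rfl⟩ := exists_mk_eq P
    obtain ⟨w, rfl⟩ := (mk_le_iff hx).1 hP
    have hw : w ≠ 0 := by rintro rfl; exact hx (map_zero g)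
    obtain ⟨i, hi⟩ := exists_eq_lineRep_or_eq_neg w hw
    have hmk : φ i = mk (g w) hx := by
      refine ((mk_eq_mk_iff hx _).2 ?_).symm
      rwa [← map_neg, hg.eq_iff, hg.eq_iff]
    exact ⟨i, (h _ _).symm.trans (congrArg c hmk), hmk⟩
  · rintro ⟨i, hi, rfl⟩
    exact ⟨(mk_le_iff _).2 ⟨_, rfl⟩, (h _ _).trans hi⟩

lemma ncard_fiber_eq_two_iff (q : Fin 4 → Bool) :
    {i | q i = true}.ncard = 2 ∧ {i | q i = false}.ncard = 2 ↔
      ¬ ((q 0 ≠ q 1 → q 2 = q 3) ∧ (q 0 = q 1 → q 2 = q 0 ∨ q 3 = q 0)) := by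
  simp only [Set.ncard_eq_toFinset_card', Set.toFinset_ofPred]
  revert q
  decide

lemma IsLift.balancedLineFree_iff_forall_injective (h : IsLift f c) :
    BalancedLineFree c ↔ ∀ g : ZMod 3 × ZMod 3 →ₗ[ZMod 3] Fin n → ZMod 3, Function.Injective g →
      (f (g (1, 0)) ≠ f (g (0, 1)) → f (g (1, 1)) = f (g (1, -1))) ∧
      (f (g (1, 0)) = f (g (0, 1)) →
        f (g (1, 1)) = f (g (1, 0)) ∨ f (g (1, -1)) = f (g (1, 0))) := by
  have hline (g : ZMod 3 × ZMod 3 →ₗ[ZMod 3] Fin n → ZMod 3) :=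
    ncard_fiber_eq_two_iff fun i => f (g (lineRep i))
  constructor
  · intro hc g hg
    by_contra hbal
    refine hc ⟨LinearMap.range g, ?_, ?_⟩
    · rw [LinearMap.finrank_range_of_inj hg]
      simp
    · rw [h.ncard_points_range hg, h.ncard_points_range hg]
      exact (hline g).2 hbal
  · rintro hg ⟨L, hL, hcard⟩
    let e : (ZMod 3 × ZMod 3) ≃ₗ[ZMod 3] L := LinearEquiv.ofFinrankEq _ _ (by simp [hL])
    have he : Function.Injective (L.subtype ∘ₗ e.toLinearMap) :=
      L.injective_subtype.comp e.injective
    have hrange : LinearMap.range (L.subtype ∘ₗ e.toLinearMap) = L := by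
      rw [LinearMap.range_comp, LinearEquiv.range, Submodule.map_top, Submodule.range_subtype]
    rw [← hrange, h.ncard_points_range he, h.ncard_points_range he] at hcard
    exact (hline _).1 hcard (hg _ he)

lemma injective_of_forall_lineRep {V : Type*} [AddCommGroup V] [Module (ZMod 3) V]
    {g : ZMod 3 × ZMod 3 →ₗ[ZMod 3] V} (hg : ∀ i, g (lineRep i) ≠ 0) : Function.Injective g := by
  refine (injective_iff_map_eq_zero g).2 fun w hw => ?_
  by_contra hw₀
  obtain ⟨i, rfl | rfl⟩ := exists_eq_lineRep_or_eq_neg w hw₀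
  · exact hg i hw
  · exact hg i (neg_eq_zero.1 ((map_neg g _).symm.trans hw))

lemma not_split_of_dependent {V : Type*} [AddCommGroup V] [Module (ZMod 3) V] {f : V → Bool}
    (hf : ∀ x, f (-x) = f x) {x y : V} (h : x = 0 ∨ y = 0 ∨ x = y ∨ x = -y) :
    (f x ≠ f y → f (x + y) = f (x - y)) ∧ (f x = f y → f (x + y) = f x ∨ f (x - y) = f x) := by
  rcases h with rfl | rfl | rfl | rfl
  · simp [hf, eq_comm]
  · simp
  · simp [add_self_eq_neg, hf]
  · rw [← neg_add', add_self_eq_neg]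
    simp [hf]

lemma IsLift.balancedLineFree_iff (h : IsLift f c) : BalancedLineFree c ↔ IsUnbalanced f := by
  rw [h.balancedLineFree_iff_forall_injective]
  constructor
  · intro hc
    have key (x y : Fin n → ZMod 3) : (f x ≠ f y → f (x + y) = f (x - y)) ∧
        (f x = f y → f (x + y) = f x ∨ f (x - y) = f x) := by
      by_cases hxy : x = 0 ∨ y = 0 ∨ x = y ∨ x = -y
      · exact not_split_of_dependent h.apply_neg hxy
      push Not at hxy
      obtain ⟨hx, hy, hne, hne_neg⟩ := hxy
      let g := (LinearMap.toSpanSingleton (ZMod 3) _ x).coprod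
        (LinearMap.toSpanSingleton (ZMod 3) _ y)
      have hg : Function.Injective g := by
        refine injective_of_forall_lineRep fun i => ?_
        fin_cases i
        · simpa [g, lineRep] using hx
        · simpa [g, lineRep] using hy
        · simpa [g, lineRep, add_eq_zero_iff_eq_neg] using hne_neg
        · simpa [g, lineRep, ← sub_eq_add_neg, sub_eq_zero] using hne
      simpa [g, sub_eq_add_neg] using hc g hg
    exact ⟨h.apply_neg, (key _ _).1, (key _ _).2⟩
  · intro hf g _
    have hadd : g (1, 1) = g (1, 0) + g (0, 1) := by rw [← map_add]; rfl
    have hsub : g (1, -1) = g (1, 0) - g (0, 1) := by rw [← map_sub]; rfl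
    rw [hadd, hsub]
    exact ⟨hf.map_add_eq_map_sub, hf.map_add_or_map_sub⟩

end Lift

section Flag

lemma isUnbalanced_comp_of_isNonarchimedean {V R : Type*} [AddCommGroup V] [Module (ZMod 3) V]
    [LinearOrder R] {v : V → R} (hv : IsNonarchimedean v) (hneg : ∀ x, v (-x) = v x)
    (χ : R → Bool) : IsUnbalanced (χ ∘ v) := by
  have hmax {x y : V} (hne : v x ≠ v y) : v (x + y) = max (v x) (v y) :=
    IsNonarchimedean.add_eq_max_of_ne' v hv (fun a => (hneg a).symm) hne
  have hsub (x y : V) : v (x - y) ≤ max (v x) (v y) := by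
    simpa only [sub_eq_add_neg, hneg] using hv x (-y)
  refine ⟨fun x => congrArg χ (hneg x), fun {x y} h => ?_, fun {x y} h => ?_⟩
  · have hne : v x ≠ v y := fun hxy => h (congrArg χ hxy)
    have hne_neg : v x ≠ v (-y) := by rwa [hneg]
    exact congrArg χ (by rw [sub_eq_add_neg, hmax hne, hmax hne_neg, hneg])
  · by_cases hxy : v x = v y
    · have hle : v x ≤ max (v (x + y)) (v (x - y)) := by
        have := hv (x + y) (x - y)
        rwa [add_add_sub_cancel, add_self_eq_neg, hneg] at this
      have hadd_le : v (x + y) ≤ v x := by simpa [← hxy] using hv x y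
      have hsub_le : v (x - y) ≤ v x := by simpa [← hxy] using hsub x y
      exact (le_max_iff.1 hle).imp (fun h => congrArg χ (hadd_le.antisymm h))
        (fun h => congrArg χ (hsub_le.antisymm h))
    · refine .inl ((congrArg χ (hmax hxy)).trans ?_)
      rcases max_choice (v x) (v y) with h' | h' <;> rw [h']
      · rfl
      · exact h.symm

/-- The position, counted from `1`, of the last nonzero entry of `x`; it is `0` for `x = 0`. -/
def lastIndex {n : ℕ} {R : Type*} [Zero R] [DecidableEq R] (x : Fin n → R) : ℕ :=
  (Finset.univ.filter (x · ≠ 0)).sup fun i => i + 1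

variable {n : ℕ}

lemma lastIndex_le_iff {R : Type*} [Zero R] [DecidableEq R] {x : Fin n → R} {k : ℕ} :
    lastIndex x ≤ k ↔ ∀ i : Fin n, k ≤ i → x i = 0 := by
  simp only [lastIndex, Finset.sup_le_iff, Finset.mem_filter_univ, Nat.succ_le_iff]
  exact forall_congr' fun i => by rw [← not_imp_not, not_not, not_lt]

lemma exists_lastIndex_eq {R : Type*} [Zero R] [DecidableEq R] {x : Fin n → R} (hx : x ≠ 0) :
    ∃ i, x i ≠ 0 ∧ lastIndex x = i + 1 := by
  obtain ⟨j, hj⟩ := Function.ne_iff.1 hx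
  have hsupp : (Finset.univ.filter (x · ≠ 0)).Nonempty := ⟨j, by simpa using hj⟩
  obtain ⟨i, hi, h⟩ := Finset.exists_mem_eq_sup _ hsupp fun i => (i + 1 : ℕ)
  exact ⟨i, by simpa using hi, h⟩

lemma lastIndex_neg {R : Type*} [SubtractionMonoid R] [DecidableEq R] (x : Fin n → R) :
    lastIndex (-x) = lastIndex x := by
  simp only [lastIndex, Pi.neg_apply, neg_ne_zero]

lemma isNonarchimedean_lastIndex {R : Type*} [AddZeroClass R] [DecidableEq R] :
    IsNonarchimedean (lastIndex : (Fin n → R) → ℕ) := by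
  intro x y
  refine lastIndex_le_iff.2 fun i hi => ?_
  rw [Pi.add_apply, lastIndex_le_iff.1 le_rfl i ((le_max_left _ _).trans hi),
    lastIndex_le_iff.1 le_rfl i ((le_max_right _ _).trans hi), add_zero]

/-- The colouring of vectors by the parity of the position of the last nonzero entry. -/
def flagColoring (n : ℕ) (x : Fin n → ZMod 3) : Bool :=
  (lastIndex x).bodd

lemma isUnbalanced_flagColoring (n : ℕ) : IsUnbalanced (flagColoring n) :=
  isUnbalanced_comp_of_isNonarchimedean isNonarchimedean_lastIndex lastIndex_neg Nat.bodd

lemma finrank_le_card_of_forall_exists_ne_zero {K ι : Type*} [Field K]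
    (W : Submodule K (ι → K)) (I : Finset ι) (h : ∀ x ∈ W, x ≠ 0 → ∃ i ∈ I, x i ≠ 0) :
    finrank K W ≤ I.card := by
  let restrict : W →ₗ[K] (I → K) := LinearMap.funLeft K K (Subtype.val) ∘ₗ W.subtype
  have hinj : Function.Injective restrict := by
    refine (injective_iff_map_eq_zero restrict).2 fun x hx => ?_
    by_contra hx₀
    obtain ⟨i, hi, hxi⟩ := h x x.2 (by simpa using hx₀)
    exact hxi (congrFun hx ⟨i, hi⟩)
  simpa using LinearMap.finrank_le_finrank_of_injective hinj

lemma card_filter_bodd_le (n : ℕ) (b : Bool) :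
    (Finset.univ.filter fun i : Fin n => (i + 1 : ℕ).bodd = b).card ≤ (n + 1) / 2 := by
  rw [← Finset.card_range ((n + 1) / 2)]
  refine Finset.card_le_card_of_injOn (fun i => i / 2) ?_ ?_
  · intro i _
    simp only [Finset.coe_range, Set.mem_Iio]
    omega
  · intro i hi j hj hij
    have hparity : (i + 1 : ℕ) % 2 = (j + 1) % 2 := by
      rw [Nat.mod_two_of_bodd, Nat.mod_two_of_bodd, (Finset.mem_filter.1 hi).2,
        (Finset.mem_filter.1 hj).2]
    dsimp only at hij
    exact Fin.ext (by omega)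

lemma finrank_le_of_isMonochromatic_flagColoring {W : Submodule (ZMod 3) (Fin n → ZMod 3)}
    {b : Bool} (hW : IsMonochromatic (flagColoring n) W b) : finrank (ZMod 3) W ≤ (n + 1) / 2 := by
  refine (finrank_le_card_of_forall_exists_ne_zero W _ fun x hxW hx => ?_).trans
    (card_filter_bodd_le n b)
  obtain ⟨i, hxi, hi⟩ := exists_lastIndex_eq hx
  exact ⟨i, by simpa [flagColoring, hi] using hW x hxW hx, hxi⟩

end Flag

/-- If `n ≥ 2` and `c` is a two-colouring of the points of `𝔽₃ⁿ` such that no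
two-dimensional subspace contains exactly two points of each colour, then there
is a subspace of dimension at least `⌈n/2⌉` all of whose points get the same
colour; moreover `⌈n/2⌉` is best possible. -/
theorem stmt7 {n : ℕ} (hn : 2 ≤ n) (c : ProjPoint3 n → Bool)
    (hc : BalancedLineFree c) :
    (∃ W : Submodule (ZMod 3) (Fin n → ZMod 3),
      (n + 1) / 2 ≤ Module.finrank (ZMod 3) W ∧
      ∀ P Q : ProjPoint3 n, P.1 ≤ W → Q.1 ≤ W → c P = c Q) ∧
    (∃ c' : ProjPoint3 n → Bool, BalancedLineFree c' ∧
      ∀ W : Submodule (ZMod 3) (Fin n → ZMod 3),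
        (∀ P Q : ProjPoint3 n, P.1 ≤ W → Q.1 ≤ W → c' P = c' Q) →
        Module.finrank (ZMod 3) W ≤ (n + 1) / 2) := by
  constructor
  · obtain ⟨f, hf⟩ := exists_isLift c
    obtain ⟨A, hA, hsup⟩ := (hf.balancedLineFree_iff.1 hc).exists_isMonochromatic_iSup_eq ⊤
    have hdim : n ≤ Module.finrank (ZMod 3) (A true) + Module.finrank (ZMod 3) (A false) := by
      have := Submodule.finrank_add_le_finrank_add_finrank (A true) (A false)
      rwa [← iSup_bool_eq, hsup, finrank_top, finrank_fin_fun] at this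
    obtain ⟨b, hb⟩ : ∃ b, (n + 1) / 2 ≤ Module.finrank (ZMod 3) (A b) := by
      rw [Bool.exists_bool]
      omega
    exact ⟨A b, hb, hf.monochromatic_iff.2 ⟨b, hA b⟩⟩
  · have hflag := isUnbalanced_flagColoring n
    obtain ⟨c', hc'⟩ := exists_isLift_of_map_neg hflag.map_neg
    refine ⟨c', hc'.balancedLineFree_iff.2 hflag, fun W hW => ?_⟩
    obtain ⟨b, hb⟩ := hc'.monochromatic_iff.1 hW
    exact finrank_le_of_isMonochromatic_flagColoring hb
end
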